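/- arXiv:2102.12794 — 16 statements merged into one kernel-verified Lean document; each statement's English description precedes it below -/
import Mathlib

section
/- Let d ≥ 2 be an integer, let V be a (finite or infinite) set, and let c be a 2-coloring of the complete digraph on V. Then V can be covered by at most 2·∑_{i=1}^{d} d^i = 2d(d^d − 1)/(d − 1) monochromatic d-dominating subgraphs. -/
/-- The two colors for 2-colorings of complete digraphs. -/
inductive Color where
  | red : Color
  | blue : Color

/-- `U`, together with the color `j`, is the vertex set of a monochromatic `d`-dominating
subgraph of the complete digraph on `V` 2-colored by `c`: every finite `S ⊆ U` with
`1 ≤ |S| ≤ d` has a common out-neighbor `w ∈ U` with all edges `(s,w)` of color `j`. -/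
def IsMonoDom {V : Type*} (c : V → V → Color) (d : ℕ) (j : Color) (U : Set V) : Prop :=
  ∀ S : Finset V, ↑S ⊆ U → S.Nonempty → S.card ≤ d →
    ∃ w ∈ U, ∀ s ∈ S, c s w = j

/-- `A` can be covered by at most `n` monochromatic dominating sets. -/
def Cov {V : Type*} (c : V → V → Color) (d n : ℕ) (A : Set V) : Prop :=
  ∃ F : Finset (Set V × Color), F.card ≤ n ∧ (∀ a ∈ A, ∃ p ∈ F, a ∈ p.1) ∧
    ∀ p ∈ F, IsMonoDom c d p.2 p.1

lemma Cov.of_dom {V : Type*} {c : V → V → Color} {d : ℕ} {A : Set V} {j : Color}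
    (h : IsMonoDom c d j A) : Cov c d 1 A :=
  ⟨{(A, j)}, by simp, fun a ha => ⟨(A, j), by simp, ha⟩, by simpa using h⟩

lemma Cov.mono {V : Type*} {c : V → V → Color} {d n m : ℕ} {A B : Set V}
    (h : Cov c d n A) (hnm : n ≤ m) (hBA : B ⊆ A) : Cov c d m B := by
  obtain ⟨F, h1, h2, h3⟩ := h
  exact ⟨F, h1.trans hnm, fun a ha => h2 a (hBA ha), h3⟩

lemma Cov.union {V : Type*} {c : V → V → Color} {d n m : ℕ} {A B : Set V}
    (h : Cov c d n A) (h' : Cov c d m B) : Cov c d (n + m) (A ∪ B) := by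
  classical
  obtain ⟨F, h1, h2, h3⟩ := h
  obtain ⟨F', h1', h2', h3'⟩ := h'
  refine ⟨F ∪ F', (Finset.card_union_le _ _).trans (by omega), ?_, ?_⟩
  · rintro a (ha | ha)
    · obtain ⟨p, hp, hap⟩ := h2 a ha
      exact ⟨p, Finset.mem_union_left _ hp, hap⟩
    · obtain ⟨p, hp, hap⟩ := h2' a ha
      exact ⟨p, Finset.mem_union_right _ hp, hap⟩
  · intro p hp
    rcases Finset.mem_union.1 hp with hp | hp
    · exact h3 p hp
    · exact h3' p hp

lemma Cov.biUnion {V : Type*} {c : V → V → Color} {d n : ℕ} (S : Finset V) (A : V → Set V)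
    (h : ∀ s ∈ S, Cov c d n (A s)) : Cov c d (S.card * n) (⋃ s ∈ S, A s) := by
  classical
  induction S using Finset.induction_on with
  | empty => exact ⟨∅, by simp, by simp, by simp⟩
  | insert a S ha ih =>
    have h1 := (h a (by simp)).union (ih fun s hs => h s (by simp [hs]))
    refine h1.mono ?_ ?_
    · rw [Finset.card_insert_of_notMem ha]; apply le_of_eq; ring
    · simp

lemma Cov.inNbr {V : Type*} {c : V → V → Color} {d : ℕ} {r : Color} {s : V}
    (h : c s s = r) : Cov c d 1 {v | c v s = r} :=
  Cov.of_dom (j := r) fun _ hS _ _ => ⟨s, h, fun _ ht => hS ht⟩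

lemma exists_core {V : Type*} (c : V → V → Color) (b : Color) (n : ℕ) :
    ∀ D : Finset V, D.card ≤ n → D.Nonempty → (∀ t ∈ D, ∃ s ∈ D, c s t = b) →
      ∃ C ⊆ D, C.Nonempty ∧ ∀ t ∈ C, ∃ u ∈ C, c t u = b := by
  classical
  induction n with
  | zero =>
    intro D hD hne
    simp at hD
    simp [hD] at hne
  | succ n ih =>
    intro D hD hne hP
    by_cases h : ∀ t ∈ D, ∃ u ∈ D, c t u = b
    · exact ⟨D, Finset.Subset.refl _, hne, h⟩
    · push Not at h
      obtain ⟨t0, ht0, hno⟩ := h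
      obtain ⟨C, hC, h'⟩ := ih (D.erase t0)
        (by rw [Finset.card_erase_of_mem ht0]; omega)
        (by
          obtain ⟨s, hs, hst⟩ := hP t0 ht0
          refine ⟨s, Finset.mem_erase.2 ⟨?_, hs⟩⟩
          rintro rfl
          exact hno _ hs hst)
        (by
          intro t ht
          obtain ⟨s, hs, hst⟩ := hP t (Finset.mem_of_mem_erase ht)
          refine ⟨s, Finset.mem_erase.2 ⟨?_, hs⟩, hst⟩
          rintro rfl
          exact hno _ (Finset.mem_of_mem_erase ht) hst)
      exact ⟨C, hC.trans (Finset.erase_subset _ _), h'⟩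

lemma cov_main {V : Type*} (c : V → V → Color) (d : ℕ) (hd : 2 ≤ d) (r b : Color)
    (hrb : r ≠ b) (hc : ∀ x y, c x y = r ∨ c x y = b) (m : ℕ) :
    ∀ (K : Finset V) (X : Set V), K.card + m + 1 = d → (∀ x ∈ X, c x x = r) →
      (∀ k ∈ K, ∀ k' ∈ K, k ≠ k' → c k k' = b) →
      (∀ k ∈ K, ∀ x ∈ X, c k x = b ∧ c x k = b) →
      Cov c d (∑ i ∈ Finset.range (m + 1), d ^ (i + 1)) X := by
  classical
  induction m with
  | zero =>
    intro K X hK hX hKK hKX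
    simp only [zero_add, Finset.range_one, Finset.sum_singleton, pow_one]
    by_cases hdom : IsMonoDom c d r X
    · exact (Cov.of_dom hdom).mono (by omega) subset_rfl
    unfold IsMonoDom at hdom
    push Not at hdom
    obtain ⟨S, hSX, hSne, -, hS⟩ := hdom
    obtain ⟨C, hCS, ⟨t0, ht0⟩, hC⟩ := exists_core c b S.card S le_rfl hSne (by
      intro t ht
      obtain ⟨s, hs, hst⟩ := hS t (hSX ht)
      exact ⟨s, hs, (hc s t).resolve_left hst⟩)
    have hCX : ∀ t ∈ C, t ∈ X := fun t ht => hSX (hCS ht)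
    have hU : IsMonoDom c d b (↑K ∪ {x | x ∈ X ∧ ∃ t ∈ C, c x t = b}) := by
      intro T hT _ hTd
      have hCU : ∀ t ∈ C, t ∈ (↑K ∪ {x | x ∈ X ∧ ∃ t ∈ C, c x t = b} : Set V) :=
        fun t ht => Or.inr ⟨hCX t ht, hC t ht⟩
      by_cases h1 : K ⊆ T
      · by_cases h2 : T ⊆ K
        · exact ⟨t0, hCU t0 ht0, fun s hs => (hKX s (h2 hs) t0 (hCX t0 ht0)).1⟩
        · obtain ⟨x, hxT, hxK⟩ := Finset.not_subset.1 h2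
          have hTe : insert x K = T := Finset.eq_of_subset_of_card_le
            (Finset.insert_subset hxT h1)
            (by rw [Finset.card_insert_of_notMem hxK]; omega)
          rcases hT hxT with hx | ⟨_, t, ht, hxt⟩
          · exact absurd hx hxK
          · refine ⟨t, hCU t ht, fun s hs => ?_⟩
            rw [← hTe, Finset.mem_insert] at hs
            rcases hs with rfl | hs
            · exact hxt
            · exact (hKX s hs t (hCX t ht)).1
      · obtain ⟨k, hk, hkT⟩ := Finset.not_subset.1 h1
        refine ⟨k, Or.inl hk, fun s hs => ?_⟩
        rcases hT hs with h | ⟨h, _⟩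
        · exact hKK s h k hk (by rintro rfl; exact hkT hs)
        · exact (hKX k hk s h).2
    refine ((Cov.of_dom hU).union (Cov.inNbr (hX t0 (hCX t0 ht0)))).mono (by omega) ?_
    intro x hx
    rcases hc x t0 with h | h
    · exact Or.inr h
    · exact Or.inl (Or.inr ⟨hx, t0, ht0, h⟩)
  | succ m ih =>
    intro K X hK hX hKK hKX
    have hsum : ∑ i ∈ Finset.range (m + 1 + 1), d ^ (i + 1)
        = d * (1 + ∑ i ∈ Finset.range (m + 1), d ^ (i + 1)) := by
      rw [Finset.sum_range_succ', mul_add, Finset.mul_sum]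
      simp only [pow_succ']
      ring
    rw [hsum]
    by_cases hdom : IsMonoDom c d r X
    · exact (Cov.of_dom hdom).mono (Nat.one_le_iff_ne_zero.2 (Nat.mul_ne_zero (by omega) (by omega))) subset_rfl
    unfold IsMonoDom at hdom
    push Not at hdom
    obtain ⟨S, hSX, hSne, hSd, hS⟩ := hdom
    have key := Cov.biUnion (c := c) (d := d)
      (n := 1 + ∑ i ∈ Finset.range (m + 1), d ^ (i + 1)) S
      (fun s => {v | c v s = r} ∪ {x | x ∈ X ∧ c s x = b ∧ ∀ t ∈ S, c x t = b}) (by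
        intro s hs
        have hsX : s ∈ X := hSX hs
        refine (Cov.inNbr (hX s hsX)).union (ih (insert s K) _ ?_ ?_ ?_ ?_)
        · rw [Finset.card_insert_of_notMem]
          · omega
          · intro hsK
            exact hrb ((hX s hsX).symm.trans (hKX s hsK s hsX).1)
        · exact fun x hx => hX x hx.1
        · intro k hk k' hk' hne
          rcases Finset.mem_insert.1 hk with rfl | hk1 <;>
          rcases Finset.mem_insert.1 hk' with rfl | hk2
          · exact absurd rfl hne
          · exact (hKX k' hk2 _ hsX).2
          · exact (hKX k hk1 _ hsX).1
          · exact hKK k hk1 k' hk2 hne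
        · intro k hk x hx
          rcases Finset.mem_insert.1 hk with rfl | hk
          · exact ⟨hx.2.1, hx.2.2 _ hs⟩
          · exact hKX k hk x hx.1)
    refine key.mono (Nat.mul_le_mul_right _ hSd) ?_
    intro x hx
    simp only [Set.mem_iUnion]
    by_cases h : ∃ t ∈ S, c x t = r
    · obtain ⟨t, ht, hxt⟩ := h
      exact ⟨t, ht, Or.inl hxt⟩
    · push Not at h
      obtain ⟨s, hs, hsx⟩ := hS x hx
      exact ⟨s, hs, Or.inr ⟨hx, (hc s x).resolve_left hsx,
        fun t ht => (hc x t).resolve_left (h t ht)⟩⟩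

/-- Theorem: every 2-colored complete digraph on a (finite or infinite) vertex set `V`
can be covered by at most `2 * ∑_{i=1}^d d^i` monochromatic `d`-dominating subgraphs. -/
theorem cover_by_mono_d_dominating {V : Type*} (d : ℕ) (hd : 2 ≤ d)
    (c : V → V → Color) :
    ∃ t : ℕ, t ≤ 2 * ∑ i ∈ Finset.Icc 1 d, d ^ i ∧
      ∃ (U : Fin t → Set V) (j : Fin t → Color),
        (⋃ i, U i) = Set.univ ∧ ∀ i, IsMonoDom c d (j i) (U i) := by
  have hsum : ∑ i ∈ Finset.Icc 1 d, d ^ i = ∑ i ∈ Finset.range (d - 1 + 1), d ^ (i + 1) := by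
    rw [Nat.sub_add_cancel (by omega : 1 ≤ d), Finset.range_eq_Ico,
      Finset.sum_Ico_add' (fun i => d ^ i) 0 d 1]
    rfl
  have h1 := cov_main c d hd Color.red Color.blue (by simp)
    (fun x y => by cases c x y <;> simp) (d - 1) ∅ {v | c v v = Color.red}
    (by simp; omega) (fun x hx => hx) (by simp) (by simp)
  have h2 := cov_main c d hd Color.blue Color.red (by simp)
    (fun x y => by cases c x y <;> simp) (d - 1) ∅ {v | c v v = Color.blue}
    (by simp; omega) (fun x hx => hx) (by simp) (by simp)
  obtain ⟨F, hF, hcov, hdom⟩ := h1.union h2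
  refine ⟨F.card, by rw [hsum]; omega, fun i => (F.equivFin.symm i).1.1,
    fun i => (F.equivFin.symm i).1.2, ?_, fun i => hdom _ (F.equivFin.symm i).2⟩
  rw [Set.eq_univ_iff_forall]
  intro v
  obtain ⟨p, hp, hv⟩ := hcov v (by
    cases h : c v v
    · exact Or.inl h
    · exact Or.inr h)
  exact Set.mem_iUnion.2 ⟨F.equivFin ⟨p, hp⟩, by simpa using hv⟩
end

section
/- Let V be a (finite or infinite) set and let c be a 2-coloring of the complete digraph on V. Then V can be covered by at most 8 monochromatic 2-dominating subgraphs. -/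
theorem dom_of_pairs {V : Type*} (c : V → V → Color) (j : Color) (U : Set V)
    (h : ∀ a ∈ U, ∀ b ∈ U, ∃ w ∈ U, c a w = j ∧ c b w = j) : IsMonoDom c 2 j U := by
  classical
  intro S hS hne hcard
  have h12 : S.card = 1 ∨ S.card = 2 := by
    have := hne.card_pos
    omega
  rcases h12 with h1 | h2
  · obtain ⟨a, rfl⟩ := Finset.card_eq_one.1 h1
    have ha : a ∈ U := hS (by simp)
    obtain ⟨w, hw, h1, _⟩ := h a ha a ha
    exact ⟨w, hw, by simpa using h1⟩
  · obtain ⟨a, b, _, rfl⟩ := Finset.card_eq_two.1 h2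
    have ha : a ∈ U := hS (by simp)
    have hb : b ∈ U := hS (by simp)
    obtain ⟨w, hw, h1, h2⟩ := h a ha b hb
    exact ⟨w, hw, by simpa using ⟨h1, h2⟩⟩

/-- Vertices with loop of color `j` and an edge of color `j` to `x`. -/
def starSet {V : Type*} (c : V → V → Color) (j : Color) (x : V) : Set V :=
  {a | c a a = j ∧ c a x = j}

theorem star_dom {V : Type*} (c : V → V → Color) (j : Color) (x : V) (hx : c x x = j) :
    IsMonoDom c 2 j (starSet c j x) :=
  dom_of_pairs _ _ _ fun _ ha _ hb => ⟨x, ⟨hx, hx⟩, ha.2, hb.2⟩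

/-- The part of the remainder receiving color `k` from `u`. -/
def remSet {V : Type*} (c : V → V → Color) (j k : Color) (u v : V) : Set V :=
  {a | c a a = j ∧ c a u = k ∧ c a v = k ∧ c u a = k}

def Covered {V : Type*} (c : V → V → Color) (R : Set V) : Prop :=
  ∃ (U : Fin 4 → Set V) (j : Fin 4 → Color),
    (∀ x ∈ R, ∃ i, x ∈ U i) ∧ ∀ i, IsMonoDom c 2 (j i) (U i)

theorem covered_mk {V : Type*} (c : V → V → Color) (R A B C D : Set V) (a b d e : Color)
    (hA : IsMonoDom c 2 a A) (hB : IsMonoDom c 2 b B) (hC : IsMonoDom c 2 d C)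
    (hD : IsMonoDom c 2 e D) (h : ∀ x ∈ R, x ∈ A ∨ x ∈ B ∨ x ∈ C ∨ x ∈ D) : Covered c R := by
  refine ⟨![A, B, C, D], ![a, b, d, e], ?_, ?_⟩
  · intro x hx
    rcases h x hx with h | h | h | h
    · exact ⟨0, h⟩
    · exact ⟨1, h⟩
    · exact ⟨2, h⟩
    · exact ⟨3, h⟩
  · intro i
    fin_cases i
    · exact hA
    · exact hB
    · exact hC
    · exact hD

theorem covered_case {V : Type*} (c : V → V → Color) (j k : Color)
    (hjk : ∀ a b, c a b = j ∨ c a b = k) (u v x t : V)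
    (hu : c u u = j) (hv : c v v = j)
    (hx : x ∈ remSet c j k u v) (ht : t ∈ remSet c j k u v)
    (hxt : c x t = k) (htx : c t x = k) : Covered c {a | c a a = j} := by
  obtain ⟨hx1, hx2, hx3, hx4⟩ := hx
  obtain ⟨ht1, ht2, ht3, ht4⟩ := ht
  refine covered_mk c _ (starSet c j u) (starSet c j v) (starSet c j x)
    ({a | c a u = k ∧ c a x = k} ∪ {u, x}) j j j k
    (star_dom c j u hu) (star_dom c j v hv) (star_dom c j x hx1) ?_ ?_
  · apply dom_of_pairs
    have mu : u ∈ ({a | c a u = k ∧ c a x = k} ∪ {u, x} : Set V) := by simp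
    have mx : x ∈ ({a | c a u = k ∧ c a x = k} ∪ {u, x} : Set V) := by simp
    have mt : t ∈ ({a | c a u = k ∧ c a x = k} ∪ {u, x} : Set V) := Or.inl ⟨ht2, htx⟩
    rintro a (⟨ha1, ha2⟩ | rfl | rfl) b (⟨hb1, hb2⟩ | rfl | rfl)
    · exact ⟨u, mu, ha1, hb1⟩
    · exact ⟨x, mx, ha2, hx4⟩
    · exact ⟨u, mu, ha1, hx2⟩
    · exact ⟨x, mx, hx4, hb2⟩
    · exact ⟨x, mx, hx4, hx4⟩
    · exact ⟨t, mt, ht4, hxt⟩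
    · exact ⟨u, mu, hx2, hb1⟩
    · exact ⟨t, mt, hxt, ht4⟩
    · exact ⟨u, mu, hx2, hx2⟩
  · intro a ha
    rcases hjk a u with h | h
    · exact Or.inl ⟨ha, h⟩
    rcases hjk a x with h' | h'
    · exact Or.inr (Or.inr (Or.inl ⟨ha, h'⟩))
    · exact Or.inr (Or.inr (Or.inr (Or.inl ⟨h, h'⟩)))

theorem rem_dom {V : Type*} (c : V → V → Color) (j k : Color)
    (hjk : ∀ a b, c a b = j ∨ c a b = k) (u v : V)
    (h : ¬ ∃ x ∈ remSet c j k u v, ∃ t ∈ remSet c j k u v, c x t = k ∧ c t x = k) :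
    IsMonoDom c 2 j (remSet c j k u v) := by
  apply dom_of_pairs
  intro a ha b hb
  rcases hjk a b with h1 | h1
  · exact ⟨b, hb, h1, hb.1⟩
  rcases hjk b a with h2 | h2
  · exact ⟨a, ha, ha.1, h2⟩
  exact absurd ⟨a, ha, b, hb, h1, h2⟩ h

theorem covered_loops {V : Type*} (c : V → V → Color) (j k : Color)
    (hjk : ∀ a b, c a b = j ∨ c a b = k) : Covered c {a | c a a = j} := by
  by_cases h0 : ∀ a ∈ {a | c a a = j}, ∀ b ∈ {a | c a a = j},
      ∃ w ∈ {a | c a a = j}, c a w = j ∧ c b w = j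
  · have h := dom_of_pairs c j _ h0
    exact covered_mk c _ _ _ _ _ j j j j h h h h fun x hx => Or.inl hx
  push Not at h0
  obtain ⟨u, hu, v, hv, huv⟩ := h0
  by_cases h1 : ∃ x ∈ remSet c j k u v, ∃ t ∈ remSet c j k u v, c x t = k ∧ c t x = k
  · obtain ⟨x, hx, t, ht, h, h'⟩ := h1
    exact covered_case c j k hjk u v x t hu hv hx ht h h'
  by_cases h2 : ∃ x ∈ remSet c j k v u, ∃ t ∈ remSet c j k v u, c x t = k ∧ c t x = k
  · obtain ⟨x, hx, t, ht, h, h'⟩ := h2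
    exact covered_case c j k hjk v u x t hv hu hx ht h h'
  refine covered_mk c _ _ _ _ _ j j j j (star_dom c j u hu) (star_dom c j v hv)
    (rem_dom c j k hjk u v h1) (rem_dom c j k hjk v u h2) ?_
  intro a ha
  rcases hjk a u with h | h
  · exact Or.inl ⟨ha, h⟩
  rcases hjk a v with h' | h'
  · exact Or.inr (Or.inl ⟨ha, h'⟩)
  rcases hjk u a with h3 | h3
  · have h4 := (hjk v a).resolve_left (huv a ha h3)
    exact Or.inr (Or.inr (Or.inr ⟨ha, h', h, h4⟩))
  · exact Or.inr (Or.inr (Or.inl ⟨ha, h, h', h3⟩))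

/-- Theorem: every 2-colored complete digraph on a (finite or infinite) vertex set `V`
can be covered by at most 8 monochromatic 2-dominating subgraphs. -/
theorem cover_by_eight_mono_two_dominating {V : Type*} (c : V → V → Color) :
    ∃ t : ℕ, t ≤ 8 ∧
      ∃ (U : Fin t → Set V) (j : Fin t → Color),
        (⋃ i, U i) = Set.univ ∧ ∀ i, IsMonoDom c 2 (j i) (U i) := by
  have hc : ∀ a b, c a b = Color.red ∨ c a b = Color.blue := by
    intro a b
    cases c a b <;> simp
  obtain ⟨U, j, hU, hj⟩ := covered_loops c Color.red Color.blue hc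
  obtain ⟨U', j', hU', hj'⟩ := covered_loops c Color.blue Color.red fun a b => (hc a b).symm
  refine ⟨4 + 4, le_refl _, Fin.append U U', Fin.append j j', ?_, ?_⟩
  · apply Set.eq_univ_of_forall
    intro x
    rw [Set.mem_iUnion]
    rcases hc x x with h | h
    · obtain ⟨i, hi⟩ := hU x h
      exact ⟨Fin.castAdd 4 i, by rwa [Fin.append_left]⟩
    · obtain ⟨i, hi⟩ := hU' x h
      exact ⟨Fin.natAdd 4 i, by rwa [Fin.append_right]⟩
  · intro i
    refine Fin.addCases (fun i => ?_) (fun i => ?_) i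
    · rw [Fin.append_left, Fin.append_left]
      exact hj i
    · rw [Fin.append_right, Fin.append_right]
      exact hj' i
end

section
/- Let d ≥ 2 be an integer and let V be partitioned into nonempty sets R_1,…,R_d, B_1,…,B_d. Define a 2-coloring c of the complete digraph on V as follows: every edge (x,y) with x,y both in the same R_i is red; every edge with x,y both in the same B_i is blue; every edge from a vertex of R_i to a vertex of B_j (any i,j) is red; every edge from a vertex of B_i to a vertex of R_j (any i,j) is blue; every edge from R_i to R_j with i ≠ j is blue; every edge from B_i to B_j with i ≠ j is red. Then for every set U ⊆ V and color j ∈ {red, blue} such that for every finite S ⊆ U with 1 ≤ |S| ≤ d there exists w ∈ U with c(s,w) = j for all s ∈ S (i.e., U is the vertex set of a monochromatic d-dominating subgraph), U is entirely contained in one of the sets R_1,…,R_d, B_1,…,B_d. -/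
theorem mono_dom_aux {V : Type*} (d : ℕ) (hd : 2 ≤ d)
    (P Q : Fin d → Set V) (hne : ∃ i : Fin d, True)
    (hcover : ∀ v, (∃ i, v ∈ P i) ∨ (∃ i, v ∈ Q i))
    (c : V → V → Color) (a b : Color) (hab : b ≠ a)
    (hQin : ∀ i : Fin d, ∀ x ∈ Q i, ∀ y ∈ Q i, c x y = b)
    (hQP : ∀ i j : Fin d, ∀ x ∈ Q i, ∀ y ∈ P j, c x y = b)
    (hPP : ∀ i j : Fin d, i ≠ j → ∀ x ∈ P i, ∀ y ∈ P j, c x y = b)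
    (U : Set V) (hU : IsMonoDom c d a U) : ∃ i, U ⊆ P i := by
  classical
  have hnoQ : ∀ v ∈ U, ∀ i, v ∉ Q i := by
    intro v hv i hvi
    let T : Finset (Fin d) := Finset.univ.filter (fun k => ∃ x ∈ U, x ∈ Q k)
    have hf : ∀ k : Fin d, ∃ x : V, x ∈ U ∧ ((∃ y ∈ U, y ∈ Q k) → x ∈ Q k) := by
      intro k
      by_cases h : ∃ y ∈ U, y ∈ Q k
      · obtain ⟨y, hy, hk⟩ := h
        exact ⟨y, hy, fun _ => hk⟩
      · exact ⟨v, hv, fun h' => absurd h' h⟩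
    choose f hfU hfQ using hf
    obtain ⟨w, hw, hs⟩ := hU (T.image f)
      (by
        intro x hx
        obtain ⟨k, -, rfl⟩ := Finset.mem_image.1 (Finset.mem_coe.1 hx)
        exact hfU k)
      ⟨f i, Finset.mem_image_of_mem f (by simp only [T, Finset.mem_filter, Finset.mem_univ, true_and]; exact ⟨v, hv, hvi⟩)⟩
      (Finset.card_image_le.trans ((Finset.card_le_univ T).trans (by simp)))
    have key : ∀ k, (∃ y ∈ U, y ∈ Q k) → c (f k) w = a := fun k hk =>
      hs _ (Finset.mem_image_of_mem f (by simpa [T] using hk))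
    rcases hcover w with ⟨k, hk⟩ | ⟨k, hk⟩
    · exact hab ((hQP i k _ (hfQ i ⟨v, hv, hvi⟩) w hk).symm.trans (key i ⟨v, hv, hvi⟩))
    · exact hab ((hQin k _ (hfQ k ⟨w, hw, hk⟩) w hk).symm.trans (key k ⟨w, hw, hk⟩))
  have hP : ∀ v ∈ U, ∃ i, v ∈ P i := fun v hv =>
    (hcover v).resolve_right (fun ⟨i, hi⟩ => hnoQ v hv i hi)
  by_cases hE : ∃ x, x ∈ U
  · obtain ⟨x, hx⟩ := hE
    obtain ⟨i, hi⟩ := hP x hx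
    refine ⟨i, fun y hy => ?_⟩
    obtain ⟨j, hj⟩ := hP y hy
    obtain ⟨w, hw, hs⟩ := hU {x, y}
      (by
        intro z hz
        simp only [Finset.coe_insert, Finset.coe_singleton, Set.mem_insert_iff,
          Set.mem_singleton_iff] at hz
        rcases hz with rfl | rfl <;> assumption)
      ⟨x, by simp⟩ (Finset.card_le_two.trans hd)
    obtain ⟨k, hk⟩ := hP w hw
    have h1 : i = k := by
      by_contra h
      exact hab ((hPP i k h x hi w hk).symm.trans (hs x (by simp)))
    have h2 : j = k := by
      by_contra h
      exact hab ((hPP j k h y hj w hk).symm.trans (hs y (by simp)))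
    rw [h1, ← h2]
    exact hj
  · obtain ⟨i, -⟩ := hne
    exact ⟨i, fun y hy => absurd ⟨y, hy⟩ hE⟩

/-- Example (adapted from CDM): if `V` is partitioned into nonempty sets
`R 1, …, R d, B 1, …, B d` and colored as described, then every monochromatic
`d`-dominating subgraph is entirely contained in one of the parts. -/
theorem mono_dom_contained_in_part {V : Type*} (d : ℕ) (hd : 2 ≤ d)
    (R B : Fin d → Set V)
    (hRne : ∀ i, (R i).Nonempty) (hBne : ∀ i, (B i).Nonempty)
    (hRR : ∀ i j : Fin d, i ≠ j → Disjoint (R i) (R j))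
    (hBB : ∀ i j : Fin d, i ≠ j → Disjoint (B i) (B j))
    (hRB : ∀ i j : Fin d, Disjoint (R i) (B j))
    (hcover : (⋃ i, R i) ∪ (⋃ i, B i) = Set.univ)
    (c : V → V → Color)
    (hcRin : ∀ i : Fin d, ∀ x ∈ R i, ∀ y ∈ R i, c x y = Color.red)
    (hcBin : ∀ i : Fin d, ∀ x ∈ B i, ∀ y ∈ B i, c x y = Color.blue)
    (hcRtoB : ∀ i j : Fin d, ∀ x ∈ R i, ∀ y ∈ B j, c x y = Color.red)
    (hcBtoR : ∀ i j : Fin d, ∀ x ∈ B i, ∀ y ∈ R j, c x y = Color.blue)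
    (hcRtoR : ∀ i j : Fin d, i ≠ j → ∀ x ∈ R i, ∀ y ∈ R j, c x y = Color.blue)
    (hcBtoB : ∀ i j : Fin d, i ≠ j → ∀ x ∈ B i, ∀ y ∈ B j, c x y = Color.red) :
    ∀ (U : Set V) (jc : Color), IsMonoDom c d jc U →
      (∃ i, U ⊆ R i) ∨ (∃ i, U ⊆ B i) := by
  intro U jc hU
  have hcov : ∀ v, (∃ i, v ∈ R i) ∨ (∃ i, v ∈ B i) := by
    intro v
    have : v ∈ (⋃ i, R i) ∪ (⋃ i, B i) := hcover ▸ Set.mem_univ v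
    simpa using this
  have hne : ∃ i : Fin d, True := ⟨⟨0, by omega⟩, trivial⟩
  cases jc with
  | red =>
    exact Or.inl (mono_dom_aux d hd R B hne hcov c Color.red Color.blue (by simp)
      hcBin hcBtoR hcRtoR U hU)
  | blue =>
    exact Or.inr (mono_dom_aux d hd B R hne (fun v => (hcov v).symm) c Color.blue Color.red
      (by simp) hcRin hcRtoB hcBtoB U hU)
end

section
/- For every integer d ≥ 2 there exists a finite set V with |V| = 2d and a 2-coloring c of the complete digraph on V such that V cannot be covered by fewer than 2d monochromatic d-dominating subgraphs. -/
/-- Loop color. -/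
def colL (b : Bool) : Color := if b then Color.red else Color.blue

/-- The coloring: every column is monochromatic off the diagonal, opposite to its loop. -/
def colC (d : ℕ) (s w : Bool × Fin d) : Color :=
  if s = w then colL w.1 else colL (!w.1)

theorem colL_inj {a b : Bool} (h : colL a = colL b) : a = b := by
  cases a <;> cases b <;> simp_all [colL]

theorem colL_surj (j : Color) : ∃ b, colL b = j := by
  cases j
  · exact ⟨true, rfl⟩
  · exact ⟨false, rfl⟩

theorem colC_subsingleton (d : ℕ) (hd : 2 ≤ d) (j : Color) (U : Set (Bool × Fin d))
    (h : IsMonoDom (colC d) d j U) : U.Subsingleton := by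
  classical
  intro x hx y hy
  by_contra hxy
  obtain ⟨b, rfl⟩ := colL_surj j
  let T : Finset (Bool × Fin d) := U.toFinset
  let A : Finset (Bool × Fin d) := T.filter (fun w => w.1 = !b)
  have hA : A.card ≤ d := by
    have : A ⊆ ({!b} : Finset Bool) ×ˢ (Finset.univ : Finset (Fin d)) := by
      intro w hw
      simp only [A, Finset.mem_filter] at hw
      exact Finset.mem_product.mpr ⟨by simp [hw.2], Finset.mem_univ _⟩
    simpa using Finset.card_le_card this
  have hAT : A ⊆ T := Finset.filter_subset _ _
  have hT : 2 ≤ T.card := by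
    have : ({x, y} : Finset _) ⊆ T := by
      intro z hz
      simp only [Finset.mem_insert, Finset.mem_singleton] at hz
      rcases hz with rfl | rfl <;> simpa [T]
    rw [← Finset.card_pair hxy]
    exact Finset.card_le_card this
  obtain ⟨S, hAS, hST, hS⟩ := Finset.exists_subsuperset_card_eq hAT
    (le_min hA (Finset.card_le_card hAT)) (min_le_right d T.card)
  have h2 : 2 ≤ S.card := by rw [hS]; exact le_min hd hT
  obtain ⟨w, hw, hwS⟩ := h S (fun z hz => by simpa [T] using hST hz)
    (Finset.card_pos.mp (by omega)) (by rw [hS]; exact min_le_left _ _)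
  obtain ⟨s, hs, hsw⟩ := Finset.exists_mem_ne (by omega : 1 < S.card) w
  have h1 := hwS s hs
  rw [colC, if_neg hsw] at h1
  have h3 := colL_inj h1
  have hwA : w ∈ A := by
    simp only [A, Finset.mem_filter]
    exact ⟨by simpa [T] using hw, by rw [← h3]; simp⟩
  have h4 := hwS w (hAS hwA)
  rw [colC, if_pos rfl] at h4
  have h5 := colL_inj h4
  rw [h5] at h3
  cases b <;> simp at h3

/-- For every `d ≥ 2` there is a finite vertex set of size `2d` and a 2-coloring of the
complete digraph on it that cannot be covered by fewer than `2d` monochromatic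
`d`-dominating subgraphs. -/
theorem lower_bound_two_d (d : ℕ) (hd : 2 ≤ d) :
    ∃ (V : Type) (inst : Fintype V) (c : V → V → Color),
      @Fintype.card V inst = 2 * d ∧
      ∀ (t : ℕ) (U : Fin t → Set V) (j : Fin t → Color),
        (⋃ i, U i) = Set.univ → (∀ i, IsMonoDom c d (j i) (U i)) → 2 * d ≤ t := by
  refine ⟨Bool × Fin d, inferInstance, colC d, by simp, ?_⟩
  intro t U j hU h
  have hc : ∀ v : Bool × Fin d, ∃ i, v ∈ U i := fun v => by
    have : v ∈ ⋃ i, U i := by rw [hU]; trivial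
    simpa using this
  choose f hf using hc
  have hinj : Function.Injective f := by
    intro x y hxy
    exact colC_subsingleton d hd _ _ (h (f x)) (hf x) (hxy ▸ hf y)
  simpa using Fintype.card_le_of_injective f hinj
end

section
/- Let d ≥ 2 be an integer and let V be a finite linearly ordered set. Define a 3-coloring c : V×V → {red, blue, green} of the complete digraph on V by: c(i,i) = green for all i ∈ V, and for all i,j ∈ V with i < j, c(i,j) = red and c(j,i) = blue. Then every monochromatic d-dominating subgraph has a single vertex as its vertex set (namely, it is a single green loop); consequently, any cover of V by monochromatic d-dominating subgraphs has at least |V| members. -/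
/-- The three colors for 3-colorings of complete digraphs. -/
inductive Color3 where
  | red : Color3
  | blue : Color3
  | green : Color3

/-- `U`, together with the color `j`, is the vertex set of a monochromatic `d`-dominating
subgraph of the complete digraph on `V` 3-colored by `c`. -/
def IsMonoDom3 {V : Type*} (c : V → V → Color3) (d : ℕ) (j : Color3) (U : Set V) : Prop :=
  ∀ S : Finset V, ↑S ⊆ U → S.Nonempty → S.card ≤ d →
    ∃ w ∈ U, ∀ s ∈ S, c s w = j

/-- In the 3-coloring of the complete digraph on a finite linearly ordered set `V`
with green loops, red edges going up and blue edges going down, every (nonempty)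
monochromatic `d`-dominating subgraph is a single green loop; consequently every
cover by monochromatic `d`-dominating subgraphs has at least `|V|` members. -/
theorem three_colors_no_bound {V : Type*} [Fintype V] [LinearOrder V]
    (d : ℕ) (hd : 2 ≤ d) (c : V → V → Color3)
    (hgreen : ∀ i : V, c i i = Color3.green)
    (hred : ∀ i j : V, i < j → c i j = Color3.red)
    (hblue : ∀ i j : V, i < j → c j i = Color3.blue) :
    (∀ (U : Set V) (jc : Color3), U.Nonempty → IsMonoDom3 c d jc U →
      ∃ v : V, U = {v} ∧ jc = Color3.green) ∧
    (∀ (t : ℕ) (U : Fin t → Set V) (jc : Fin t → Color3),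
      (⋃ i, U i) = Set.univ → (∀ i, IsMonoDom3 c d (jc i) (U i)) →
      Fintype.card V ≤ t) := by
  have key : ∀ (U : Set V) (jc : Color3), U.Nonempty → IsMonoDom3 c d jc U →
      ∃ v : V, U = {v} ∧ jc = Color3.green := by
    intro U jc hU hdom
    have hfin : U.Finite := Set.toFinite U
    cases jc with
    | red =>
      exfalso
      obtain ⟨m, hm, hmax⟩ := Set.exists_max_image U id hfin hU
      obtain ⟨w, hw, h⟩ := hdom {m} (by simpa using hm) (by simp) (by simp; omega)
      have h1 := h m (by simp)
      rcases (hmax w hw : w ≤ m).lt_or_eq with hlt | rfl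
      · rw [hblue w m hlt] at h1; cases h1
      · rw [id, hgreen] at h1; cases h1
    | blue =>
      exfalso
      obtain ⟨m, hm, hmin⟩ := Set.exists_min_image U id hfin hU
      obtain ⟨w, hw, h⟩ := hdom {m} (by simpa using hm) (by simp) (by simp; omega)
      have h1 := h m (by simp)
      rcases (hmin w hw : m ≤ w).lt_or_eq with hlt | rfl
      · rw [hred m w hlt] at h1; cases h1
      · rw [id, hgreen] at h1; cases h1
    | green =>
      have eq_of : ∀ a b : V, c a b = Color3.green → a = b := by
        intro a b h
        rcases lt_trichotomy a b with hlt | he | hlt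
        · rw [hred a b hlt] at h; cases h
        · exact he
        · rw [hblue b a hlt] at h; cases h
      obtain ⟨v, hv⟩ := hU
      refine ⟨v, ?_, rfl⟩
      ext u
      constructor
      · intro hu
        obtain ⟨w, -, h⟩ := hdom {u, v}
          (by intro x hx
              simp only [Finset.coe_insert, Finset.coe_singleton, Set.mem_insert_iff,
                Set.mem_singleton_iff] at hx
              rcases hx with rfl | rfl <;> assumption)
          (by simp) (Finset.card_le_two.trans hd)
        have h1 := eq_of _ _ (h u (by simp))
        have h2 := eq_of _ _ (h v (by simp))
        exact h1.trans h2.symm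
      · intro hu
        rw [Set.mem_singleton_iff] at hu
        rw [hu]; exact hv
  refine ⟨key, ?_⟩
  intro t U jc hcov hdom
  have hex : ∀ v : V, ∃ i, v ∈ U i := by
    intro v
    have : v ∈ ⋃ i, U i := by rw [hcov]; trivial
    simpa using this
  choose f hf using hex
  have hinj : Function.Injective f := by
    intro a b hab
    obtain ⟨v, hv, -⟩ := key (U (f a)) (jc (f a)) ⟨a, hf a⟩ (hdom _)
    have ha := hf a
    have hb := hf b
    rw [← hab] at hb
    rw [hv, Set.mem_singleton_iff] at ha hb
    exact ha.trans hb.symm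
  simpa using Fintype.card_le_of_injective f hinj
end

section
/- Let d ≥ 2 and 1 ≤ ω ≤ d be integers, let D ≥ 0 be an integer, let V be a set, and let c be a 2-coloring of the complete digraph on V with c(v,v) = red for all v ∈ V. Suppose that every subset U ⊆ V containing no blue clique of size ω can be covered by at most D red d-dominating sets within U. If V contains no blue clique of size ω + 1, then V can be covered by at most d(D + 1) red d-dominating sets. -/
/-- `U'` is a red `d`-dominating set: every finite `S ⊆ U'` with `1 ≤ |S| ≤ d` has a
common red out-neighbor inside `U'`. -/
def IsRedDom {V : Type*} (c : V → V → Color) (d : ℕ) (U' : Set V) : Prop :=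
  ∀ S : Finset V, ↑S ⊆ U' → S.Nonempty → S.card ≤ d →
    ∃ w ∈ U', ∀ s ∈ S, c s w = Color.red

/-- `A` has a blue clique of size `k`: `k` vertices of `A` pairwise joined by blue
edges in both directions. -/
def HasBlueClique {V : Type*} (c : V → V → Color) (k : ℕ) (A : Set V) : Prop :=
  ∃ X : Finset V, ↑X ⊆ A ∧ X.card = k ∧
    ∀ u ∈ X, ∀ v ∈ X, u ≠ v → c u v = Color.blue ∧ c v u = Color.blue

/-- `A` can be covered by at most `D` red `d`-dominating sets. -/
def RedDomCover {V : Type*} (c : V → V → Color) (d D : ℕ) (A : Set V) : Prop :=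
  ∃ n : ℕ, n ≤ D ∧ ∃ W : Fin n → Set V,
    (⋃ i, W i) = A ∧ ∀ i, IsRedDom c d (W i)

/-- Lemma (recursion `f(ω,d) ≤ d(f(ω-1,d)+1)`): if all loops are red, every subset
with no blue clique of size `ω` can be covered by at most `D` red `d`-dominating sets,
and `V` has no blue clique of size `ω+1`, then `V` can be covered by at most
`d(D+1)` red `d`-dominating sets. -/
theorem recursion_lemma {V : Type*} (d ω D : ℕ) (hd : 2 ≤ d)
    (hω₁ : 1 ≤ ω) (hωd : ω ≤ d)
    (c : V → V → Color)
    (hloop : ∀ v : V, c v v = Color.red)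
    (hind : ∀ U : Set V, ¬ HasBlueClique c ω U → RedDomCover c d D U)
    (hV : ¬ HasBlueClique c (ω + 1) (Set.univ : Set V)) :
    RedDomCover c d (d * (D + 1)) (Set.univ : Set V) := by
  classical
  have hcol : ∀ x : Color, x ≠ Color.red → x = Color.blue := by
    intro x hx
    cases x
    · exact absurd rfl hx
    · rfl
  by_cases hdom : IsRedDom c d (Set.univ : Set V)
  · refine ⟨1, by nlinarith, fun _ => Set.univ, ?_, fun _ => hdom⟩
    exact Set.iUnion_const _
  unfold IsRedDom at hdom
  push Not at hdom
  obtain ⟨S, -, -, hScard, hS⟩ := hdom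
  have hcov : ∀ s : S, RedDomCover c d D
      {v | c s v = Color.blue ∧ c v s = Color.blue} := by
    intro s
    apply hind
    rintro ⟨X, hXs, hXc, hX⟩
    apply hV
    have hs : (s : V) ∉ X := by
      intro h
      have h1 := (hXs h).1
      rw [hloop] at h1
      cases h1
    refine ⟨insert (s : V) X, Set.subset_univ _, by rw [Finset.card_insert_of_notMem hs, hXc], ?_⟩
    intro u hu v hv huv
    rcases Finset.mem_insert.1 hu with rfl | hu
    · rcases Finset.mem_insert.1 hv with rfl | hv
      · exact absurd rfl huv
      · exact hXs hv
    · rcases Finset.mem_insert.1 hv with rfl | hv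
      · exact (hXs hu).symm
      · exact hX u hu v hv huv
  choose n hn W hWU hW using hcov
  let F : (Σ s : S, Option (Fin (n s))) → Set V := fun p =>
    match p with
    | ⟨s, none⟩ => {v | c v s = Color.red}
    | ⟨s, some i⟩ => W s i
  let e := Fintype.equivFin (Σ s : S, Option (Fin (n s)))
  refine ⟨Fintype.card (Σ s : S, Option (Fin (n s))), ?_, fun i => F (e.symm i), ?_, ?_⟩
  · rw [Fintype.card_sigma]
    calc ∑ s : S, Fintype.card (Option (Fin (n s))) ≤ ∑ s : S, (D + 1) := by
          apply Finset.sum_le_sum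
          intro s _
          simpa using hn s
      _ = S.card * (D + 1) := by simp
      _ ≤ d * (D + 1) := Nat.mul_le_mul_right _ hScard
  · rw [Set.eq_univ_iff_forall]
    intro v
    obtain ⟨s, hs, hsv⟩ := hS v (Set.mem_univ v)
    have : ∃ p, v ∈ F p := by
      by_cases hvs : c v s = Color.red
      · exact ⟨⟨⟨s, hs⟩, none⟩, hvs⟩
      · have hm : v ∈ ⋃ i, W ⟨s, hs⟩ i := by
          rw [hWU]
          exact ⟨hcol _ hsv, hcol _ hvs⟩
        obtain ⟨i, hi⟩ := Set.mem_iUnion.1 hm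
        exact ⟨⟨⟨s, hs⟩, some i⟩, hi⟩
    obtain ⟨p, hp⟩ := this
    exact Set.mem_iUnion.2 ⟨e p, by simpa using hp⟩
  · intro i
    show IsRedDom c d (F (e.symm i))
    generalize e.symm i = p
    obtain ⟨s, _ | j⟩ := p
    · intro T hT _ _
      exact ⟨s, hloop s, fun t ht => hT ht⟩
    · exact hW s j
end

section
/- Let d ≥ 2 be an integer, let V be a set, and let c be a 2-coloring of the complete digraph on V such that c(v,v) = red for all v ∈ V and there are no two distinct vertices u,v ∈ V with c(u,v) = c(v,u) = blue. Then V can be covered by at most d red d-dominating sets. -/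
/-- Lemma (f(1,d) ≤ d): if all loops are red and no two distinct vertices are joined
by blue edges in both directions, then `V` can be covered by at most `d` red
`d`-dominating sets. -/
theorem cover_by_d_red_dominating {V : Type*} (d : ℕ) (hd : 2 ≤ d)
    (c : V → V → Color)
    (hloop : ∀ v : V, c v v = Color.red)
    (hblue : ∀ u v : V, u ≠ v → ¬(c u v = Color.blue ∧ c v u = Color.blue)) :
    ∃ n : ℕ, n ≤ d ∧ ∃ W : Fin n → Set V,
      (⋃ i, W i) = Set.univ ∧ ∀ i, IsRedDom c d (W i) := by
  by_cases h : IsRedDom c d Set.univ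
  · exact ⟨1, by omega, fun _ => Set.univ, by simp [Set.iUnion_const], fun _ => h⟩
  · unfold IsRedDom at h
    push Not at h
    obtain ⟨S, -, -, hcard, hS⟩ := h
    refine ⟨S.card, hcard, fun i => {w | c w (S.equivFin.symm i : V) = Color.red}, ?_, ?_⟩
    · rw [Set.eq_univ_iff_forall]
      intro w
      obtain ⟨s, hs, hsw⟩ := hS w (Set.mem_univ w)
      rw [Set.mem_iUnion]
      refine ⟨S.equivFin ⟨s, hs⟩, ?_⟩
      simp only [Set.mem_setOf_eq, Equiv.symm_apply_apply]
      have hne : s ≠ w := by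
        rintro rfl
        exact hsw (hloop s)
      have h1 := hblue s w hne
      cases h2 : c w s with
      | red => rfl
      | blue =>
        cases h3 : c s w with
        | red => exact absurd h3 hsw
        | blue => exact absurd ⟨h3, h2⟩ h1
    · intro i T hT _ _
      exact ⟨(S.equivFin.symm i : V), hloop _, fun t ht => hT ht⟩
end

section
/- Let d ≥ 2 and 1 ≤ ω ≤ d be integers, let V be a set, and let c be a 2-coloring of the complete digraph on V such that c(v,v) = red for all v ∈ V and V contains no blue clique of size ω + 1. Then V can be covered by at most ∑_{i=1}^{ω} d^i red d-dominating sets. -/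
open Classical in
theorem cover_aux {V : Type*} (d : ℕ) (hd : 2 ≤ d) (c : V → V → Color)
    (hloop : ∀ v : V, c v v = Color.red) (ω : ℕ) :
    ∀ A : Set V, ¬ HasBlueClique c (ω + 1) A →
    ∃ F : Finset (Set V), F.card ≤ ∑ i ∈ Finset.Icc 1 ω, d ^ i ∧
      (∀ a ∈ A, ∃ W ∈ F, a ∈ W) ∧ ∀ W ∈ F, IsRedDom c d W := by
  induction ω with
  | zero =>
    intro A hA
    refine ⟨∅, by simp, ?_, by simp⟩
    intro a ha
    exact absurd ⟨{a}, by simpa using ha, by simp, by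
      intro u hu v hv huv
      simp at hu hv
      exact absurd (hu.trans hv.symm) huv⟩ hA
  | succ ω ih =>
    intro A hA
    have hsum : ∑ i ∈ Finset.Icc 1 (ω + 1), d ^ i
        = d * (1 + ∑ i ∈ Finset.Icc 1 ω, d ^ i) := by
      clear ih hA
      induction ω with
      | zero => simp
      | succ n ihn =>
        rw [Finset.sum_Icc_succ_top (by omega)]
        conv_rhs => rw [Finset.sum_Icc_succ_top (by omega)]
        rw [ihn]
        ring
    by_cases hdom : IsRedDom c d A
    · refine ⟨{A}, ?_, by simp, by simpa using hdom⟩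
      rw [hsum, Finset.card_singleton]
      nlinarith [Nat.zero_le (∑ i ∈ Finset.Icc 1 ω, d ^ i)]
    unfold IsRedDom at hdom
    push Not at hdom
    obtain ⟨S, hSA, -, hSd, hS⟩ := hdom
    have key : ∀ s : V, ∃ F : Finset (Set V), s ∈ S →
        (F.card ≤ ∑ i ∈ Finset.Icc 1 ω, d ^ i ∧
        (∀ a ∈ {w | w ∈ A ∧ c s w = Color.blue ∧ c w s = Color.blue}, ∃ W ∈ F, a ∈ W) ∧
        ∀ W ∈ F, IsRedDom c d W) := by
      intro s
      by_cases hs : s ∈ S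
      swap
      · exact ⟨∅, fun h => absurd h hs⟩
      obtain ⟨F, hF⟩ := ih {w | w ∈ A ∧ c s w = Color.blue ∧ c w s = Color.blue} (by
        rintro ⟨X, hXA, hXc, hX⟩
        have hsX : s ∉ X := by
          intro h
          have := (hXA h).2.1
          rw [hloop] at this
          cases this
        refine hA ⟨insert s X, ?_, ?_, ?_⟩
        · intro x hx
          rcases Finset.mem_insert.1 (Finset.mem_coe.1 hx) with rfl | hx
          · exact hSA hs
          · exact (hXA hx).1
        · rw [Finset.card_insert_of_notMem hsX, hXc]
        · intro u hu v hv huv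
          rcases Finset.mem_insert.1 hu with rfl | hu2 <;>
            rcases Finset.mem_insert.1 hv with rfl | hv2
          · exact absurd rfl huv
          · exact (hXA hv2).2
          · exact (hXA hu2).2.symm
          · exact hX u hu2 v hv2 huv)
      exact ⟨F, fun _ => hF⟩
    choose F hF using key
    refine ⟨S.biUnion fun s => insert {w | c w s = Color.red} (F s), ?_, ?_, ?_⟩
    · rw [hsum]
      refine (Finset.card_biUnion_le_card_mul _ _ (1 + ∑ i ∈ Finset.Icc 1 ω, d ^ i) ?_).trans
        (Nat.mul_le_mul_right _ hSd)
      intro s hs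
      have h1 := Finset.card_insert_le {w | c w s = Color.red} (F s)
      have h2 := (hF s hs).1
      omega
    · intro a ha
      obtain ⟨s, hs, hsa⟩ := hS a ha
      have hb : c s a = Color.blue := by
        cases h : c s a
        · exact absurd h hsa
        · rfl
      cases h : c a s
      · exact ⟨{w | c w s = Color.red},
          Finset.mem_biUnion.2 ⟨s, hs, Finset.mem_insert_self _ _⟩, h⟩
      · obtain ⟨W, hW, haW⟩ := (hF s hs).2.1 a ⟨ha, hb, h⟩
        exact ⟨W, Finset.mem_biUnion.2 ⟨s, hs, Finset.mem_insert_of_mem hW⟩, haW⟩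
    · intro W hW
      obtain ⟨s, hs, hW⟩ := Finset.mem_biUnion.1 hW
      rcases Finset.mem_insert.1 hW with rfl | hW
      · intro T hT _ _
        exact ⟨s, hloop s, fun t ht => hT ht⟩
      · exact (hF s hs).2.2 W hW

/-- Lemma (f(ω,d) ≤ ∑_{i=1}^{ω} d^i): if all loops are red and `V` has no blue clique
of size `ω+1`, then `V` can be covered by at most `∑_{i=1}^{ω} d^i` red
`d`-dominating sets. -/
theorem cover_by_sum_red_dominating {V : Type*} (d ω : ℕ) (hd : 2 ≤ d)
    (hω₁ : 1 ≤ ω) (hωd : ω ≤ d)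
    (c : V → V → Color)
    (hloop : ∀ v : V, c v v = Color.red)
    (hV : ¬ HasBlueClique c (ω + 1) (Set.univ : Set V)) :
    ∃ n : ℕ, n ≤ ∑ i ∈ Finset.Icc 1 ω, d ^ i ∧ ∃ W : Fin n → Set V,
      (⋃ i, W i) = Set.univ ∧ ∀ i, IsRedDom c d (W i) := by
  obtain ⟨F, hc, hcov, hdom⟩ := cover_aux d hd c hloop ω Set.univ hV
  refine ⟨F.card, hc, fun i => (F.equivFin.symm i : Set V), ?_, ?_⟩
  · refine Set.eq_univ_of_forall fun a => ?_
    obtain ⟨W, hW, ha⟩ := hcov a trivial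
    exact Set.mem_iUnion.2 ⟨F.equivFin ⟨W, hW⟩, by simpa using ha⟩
  · intro i
    exact hdom _ (F.equivFin.symm i).2
end

section
/- Let d ≥ 2 be an integer and let T = (V,E) be a tournament that is critical d-dominated and has no (d+1)-dominating subtournament. Define a 2-coloring c of the complete digraph on V by c(x,y) = blue if (x,y) ∈ E and c(x,y) = red otherwise (so all loops and all reversed edges are red). Then V cannot be covered by fewer than d + 1 monochromatic (d+1)-dominating subgraphs of this 2-colored complete digraph. -/
/-- `E` is a tournament on `V`: loopless, and for all distinct `x,y` exactly one of
`(x,y)`, `(y,x)` is an edge. -/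
def IsTournament {V : Type*} (E : V → V → Prop) : Prop :=
  (∀ x : V, ¬ E x x) ∧ ∀ x y : V, x ≠ y → (E x y ↔ ¬ E y x)

/-- The restriction of the digraph `E` to `U` is `d`-dominating: every finite `S ⊆ U`
with `1 ≤ |S| ≤ d` has a common out-neighbor in `U`. -/
def DomOn {V : Type*} (E : V → V → Prop) (d : ℕ) (U : Set V) : Prop :=
  ∀ S : Finset V, ↑S ⊆ U → S.Nonempty → S.card ≤ d → ∃ w ∈ U, ∀ s ∈ S, E s w

/-- The restriction of the digraph `E` to `U` is `d`-dominated: every finite `S ⊆ U`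
with `1 ≤ |S| ≤ d` has a common in-neighbor in `U`. -/
def DomedOn {V : Type*} (E : V → V → Prop) (d : ℕ) (U : Set V) : Prop :=
  ∀ S : Finset V, ↑S ⊆ U → S.Nonempty → S.card ≤ d → ∃ w ∈ U, ∀ s ∈ S, E w s

/-- Theorem: if `T = (V,E)` is a critical `d`-dominated tournament with no
`(d+1)`-dominating subtournament, and the complete digraph on `V` is 2-colored with
the edges of `T` blue and everything else (loops and reversed edges) red, then `V`
cannot be covered by fewer than `d+1` monochromatic `(d+1)`-dominating subgraphs. -/
theorem critical_tournament_coloring_lower_bound {V : Type*} [Nonempty V]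
    (d : ℕ) (hd : 2 ≤ d) (E : V → V → Prop) (hT : IsTournament E)
    (hdomed : DomedOn E d (Set.univ : Set V))
    (hcrit : ∀ U : Set V, U.Nonempty → U ≠ Set.univ → ¬ DomedOn E d U)
    (hnosub : ∀ U : Set V, U.Nonempty → ¬ DomOn E (d + 1) U)
    (c : V → V → Color)
    (hcb : ∀ x y : V, E x y → c x y = Color.blue)
    (hcr : ∀ x y : V, ¬ E x y → c x y = Color.red) :
    ∀ (t : ℕ) (U : Fin t → Set V) (j : Fin t → Color),
      (⋃ i, U i) = Set.univ → (∀ i, IsMonoDom c (d + 1) (j i) (U i)) →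
      d + 1 ≤ t := by
  classical
  intro t U j hcov hmono
  obtain ⟨hirr, hto⟩ := hT
  have asym : ∀ x y, E x y → ¬ E y x := by
    intro x y h h'
    by_cases e : x = y
    · subst e; exact hirr _ h
    · exact (hto x y e).1 h h'
  -- nonempty members of the cover are red
  have hred : ∀ i, (U i).Nonempty → ∀ S : Finset V, ↑S ⊆ U i → S.Nonempty → S.card ≤ d + 1 →
      ∃ w ∈ U i, ∀ s ∈ S, w = s ∨ E w s := by
    intro i hne S hS hSn hSc
    have hm := hmono i
    cases hj : j i with
    | blue =>
      exfalso
      refine hnosub (U i) hne ?_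
      intro S hS hSn hSc
      obtain ⟨w, hw, h⟩ := hm S hS hSn hSc
      refine ⟨w, hw, fun s hs => ?_⟩
      by_contra hE
      have h1 := h s hs
      rw [hcr s w hE, hj] at h1
      cases h1
    | red =>
      obtain ⟨w, hw, h⟩ := hm S hS hSn hSc
      refine ⟨w, hw, fun s hs => ?_⟩
      by_cases e : w = s
      · exact Or.inl e
      · right
        refine (hto w s e).2 fun hE => ?_
        have h1 := h s hs
        rw [hcb s w hE, hj] at h1
        cases h1
  have hproper : ∀ i, U i ≠ Set.univ := by
    intro i hi
    have hne : (U i).Nonempty := by rw [hi]; exact Set.univ_nonempty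
    have hr := hred i hne
    rw [hi] at hr
    obtain ⟨x⟩ := ‹Nonempty V›
    obtain ⟨z, -, hz⟩ := hdomed {x} (by simp) (by simp) (by simp; omega)
    have hzx : E z x := hz x (by simp)
    have hnd := hcrit {y | y ≠ x} ⟨z, fun e => hirr x (by rw [e] at hzx; exact hzx)⟩
      (fun e => (by have := Set.mem_univ x; rw [← e] at this; exact this rfl))
    unfold DomedOn at hnd
    push Not at hnd
    obtain ⟨S, hS, hSn, hSc, hno⟩ := hnd
    -- every y is weakly dominated by x or by a source of S
    have key : ∀ y, (x = y ∨ E x y) ∨ ∃ w ∈ S, (∀ s ∈ S, w = s ∨ E w s) ∧ (w = y ∨ E w y) := by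
      intro y
      obtain ⟨w, -, hw⟩ := hr (insert y S) (by simp) (by simp)
        ((Finset.card_insert_le _ _).trans (by omega))
      have hwy := hw y (by simp)
      have hwS : ∀ s ∈ S, w = s ∨ E w s := fun s hs => hw s (by simp [hs])
      by_cases hwm : w ∈ S
      · exact Or.inr ⟨w, hwm, hwS, hwy⟩
      · left
        by_cases e : w = x
        · rw [← e]; exact hwy
        · exfalso
          obtain ⟨s, hs, hn⟩ := hno w e
          rcases hwS s hs with h | h
          · exact hwm (h ▸ hs)
          · exact hn h
    rcases key z with h | ⟨w, hwS, hw, -⟩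
    · rcases h with h | h
      · rw [h] at hzx; exact hirr _ hzx
      · exact asym _ _ h hzx
    · obtain ⟨y, -, hy⟩ := hdomed {x, w} (by simp) (by simp) (Finset.card_le_two.trans hd)
      have hyx := hy x (by simp)
      have hyw := hy w (by simp)
      rcases key y with (h | h) | ⟨w', hwS', hw', h⟩
      · rw [h] at hyx; exact hirr _ hyx
      · exact asym _ _ h hyx
      · have e : w = w' := by
          rcases hw w' hwS' with h1 | h1
          · exact h1
          · rcases hw' w hwS with h2 | h2
            · exact h2.symm
            · exact absurd h2 (asym _ _ h1)
        subst e
        rcases h with h | h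
        · rw [h] at hyw; exact hirr _ hyw
        · exact asym _ _ h hyw
  -- each nonempty member has a source
  have hsrc : ∀ i, ∃ w : V, ∀ y ∈ U i, w = y ∨ E w y := by
    intro i
    by_cases hne : (U i).Nonempty
    · have hnd := hcrit (U i) hne (hproper i)
      have hr := hred i hne
      unfold DomedOn at hnd
      push Not at hnd
      obtain ⟨S, hS, hSn, hSc, hno⟩ := hnd
      have key : ∀ y ∈ U i, ∃ w ∈ S, (∀ s ∈ S, w = s ∨ E w s) ∧ (w = y ∨ E w y) := by
        intro y hy
        obtain ⟨w, hwU, hw⟩ := hr (insert y S)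
          (by rw [Finset.coe_insert]; exact Set.insert_subset hy hS) (by simp)
          ((Finset.card_insert_le _ _).trans (by omega))
        have hwy := hw y (by simp)
        have hwS : ∀ s ∈ S, w = s ∨ E w s := fun s hs => hw s (by simp [hs])
        by_cases hwm : w ∈ S
        · exact ⟨w, hwm, hwS, hwy⟩
        · exfalso
          obtain ⟨s, hs, hn⟩ := hno w hwU
          rcases hwS s hs with h | h
          · exact hwm (h ▸ hs)
          · exact hn h
      obtain ⟨z, hz⟩ := hne
      obtain ⟨w, hwS, hw, -⟩ := key z hz
      refine ⟨w, fun y hy => ?_⟩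
      obtain ⟨w', hwS', hw', h⟩ := key y hy
      have e : w = w' := by
        rcases hw w' hwS' with h1 | h1
        · exact h1
        · rcases hw' w hwS with h2 | h2
          · exact h2.symm
          · exact absurd h2 (asym _ _ h1)
      subst e
      exact h
    · obtain ⟨x⟩ := ‹Nonempty V›
      exact ⟨x, fun y hy => absurd ⟨y, hy⟩ hne⟩
  choose w hw using hsrc
  by_contra hlt
  have hin : ∀ x : V, ∃ i, x ∈ U i := fun x => by
    have := Set.mem_univ x
    rw [← hcov] at this
    exact Set.mem_iUnion.1 this
  obtain ⟨x⟩ := ‹Nonempty V›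
  obtain ⟨i0, -⟩ := hin x
  obtain ⟨v, -, hv⟩ := hdomed (Finset.univ.image w) (by simp)
    ⟨w i0, Finset.mem_image_of_mem _ (Finset.mem_univ _)⟩
    (Finset.card_image_le.trans (by simp; omega))
  obtain ⟨i, hi⟩ := hin v
  have h1 := hv (w i) (Finset.mem_image_of_mem _ (Finset.mem_univ _))
  rcases hw i v hi with h | h
  · rw [h] at h1; exact hirr _ h1
  · exact asym _ _ h h1
end

section
/- For every integer d ≥ 3 there exists a finite set V and a 2-coloring c of the complete digraph on V such that c(v,v) = red for all v ∈ V, there are no two distinct vertices u,v ∈ V with c(u,v) = c(v,u) = blue, and V cannot be covered by fewer than d monochromatic d-dominating subgraphs. (Together with the matching upper bound, this shows f(1,d) = d for all d ≥ 3.) -/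
/-- Tournament relation. -/
def Tour {V : Type} (r : V → V → Prop) : Prop :=
  (∀ u v, r u v → ¬ r v u) ∧ (∀ u v, u ≠ v → r u v ∨ r v u)

/-- Every at most `k` vertices of `U` have a common in-neighbour in `U`. -/
def ParOn {V : Type} (r : V → V → Prop) (k : ℕ) (U : Set V) : Prop :=
  ∀ X : Finset V, ↑X ⊆ U → X.card ≤ k → ∃ w ∈ U, ∀ x ∈ X, r w x

/-- There is a paradoxical tournament on `n` vertices. -/
def HasPar (k n : ℕ) : Prop :=
  ∃ (V : Type) (_ : Fintype V) (r : V → V → Prop),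
    Fintype.card V = n ∧ Tour r ∧ ParOn r k Set.univ

theorem exists_hasPar (k : ℕ) : ∃ n, HasPar k n := by
  classical
  let N := k * k + k + 1
  let V := Fin N × {s : Finset (Fin N) // s.card ≤ k}
  let b : V → V → Prop := fun u v =>
    Xor (Xor (v.1 ∈ u.2.1) (u.1 ∈ v.2.1)) (u.1 < v.1)
  let e : V ≃ Fin (Fintype.card V) := Fintype.equivFin V
  let r : V → V → Prop := fun u v => (u.1 ≠ v.1 ∧ b u v) ∨ (u.1 = v.1 ∧ e u < e v)
  refine ⟨Fintype.card V, V, inferInstance, r, rfl, ⟨?_, ?_⟩, ?_⟩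
  · rintro u v (⟨h, h1⟩ | ⟨h, h1⟩) (⟨h', h2⟩ | ⟨h', h2⟩)
    · simp only [b, Xor] at h1 h2
      have : u.1 < v.1 ↔ ¬ v.1 < u.1 := by
        constructor
        · exact fun h => not_lt.2 h.le
        · intro h3; exact lt_of_le_of_ne (not_lt.1 h3) h
      tauto
    · exact h h'.symm
    · exact h' h.symm
    · exact lt_asymm h1 h2
  · intro u v huv
    by_cases h : u.1 = v.1
    · rcases lt_trichotomy (e u) (e v) with h1 | h1 | h1
      · exact Or.inl (Or.inr ⟨h, h1⟩)
      · exact absurd (e.injective h1) huv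
      · exact Or.inr (Or.inr ⟨h.symm, h1⟩)
    · have h3 : u.1 < v.1 ↔ ¬ v.1 < u.1 := by
        constructor
        · exact fun h => not_lt.2 h.le
        · intro h3; exact lt_of_le_of_ne (not_lt.1 h3) h
      have h' : v.1 ≠ u.1 := fun h4 => h h4.symm
      simp only [r, b, Xor]
      tauto
  · intro X _ hX
    let A : Finset (Fin N) := X.image Prod.fst
    let B : Finset (Fin N) := X.biUnion (fun x => x.2.1)
    have hA : A.card ≤ k := Finset.card_image_le.trans hX
    have hB : B.card ≤ k * k :=
      (Finset.card_biUnion_le_card_mul X _ k (fun x _ => x.2.2)).trans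
        (Nat.mul_le_mul_right k hX)
    obtain ⟨a, ha⟩ : ∃ a, a ∉ A ∪ B := by
      by_contra hcon
      push Not at hcon
      have h1 : (A ∪ B) = Finset.univ := Finset.eq_univ_iff_forall.2 hcon
      have h2 := Finset.card_union_le A B
      rw [h1, Finset.card_univ, Fintype.card_fin] at h2
      omega
    rw [Finset.mem_union, not_or] at ha
    refine ⟨(a, ⟨A.filter (fun y => ¬ a < y), (Finset.card_filter_le _ _).trans hA⟩),
      trivial, ?_⟩
    intro x hx
    have hxA : x.1 ∈ A := Finset.mem_image_of_mem _ hx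
    have hxB : a ∉ x.2.1 := fun h => ha.2 (Finset.mem_biUnion.2 ⟨x, hx, h⟩)
    refine Or.inl ⟨fun h => ha.1 (by rw [show a = x.1 from h]; exact hxA), ?_⟩
    simp only [b, Xor, Finset.mem_filter]
    tauto

theorem hasPar_of_set {V : Type} [Fintype V] (r : V → V → Prop) (hr : Tour r) (k : ℕ)
    (U : Set V) (h : ParOn r k U) (hU : U ≠ Set.univ) :
    ∃ m, m < Fintype.card V ∧ HasPar k m := by
  classical
  refine ⟨Fintype.card U, ?_, U, inferInstance, fun a b => r a b, rfl, ⟨?_, ?_⟩, ?_⟩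
  · obtain ⟨x, hx⟩ := (Set.ne_univ_iff_exists_notMem U).1 hU
    exact Fintype.card_subtype_lt (p := fun x => x ∈ U) hx
  · intro u v; exact hr.1 u v
  · intro u v huv; exact hr.2 u v (fun h => huv (Subtype.ext h))
  · intro X _ hX
    obtain ⟨w, hw, hw'⟩ := h (X.image Subtype.val)
      (by intro x hx; simp at hx; exact hx.1)
      (Finset.card_image_le.trans hX)
    exact ⟨⟨w, hw⟩, trivial, fun x hx => hw' x (Finset.mem_image_of_mem _ hx)⟩

theorem red_star {V : Type} (r : V → V → Prop) (hr : Tour r) (d : ℕ) (hd : 3 ≤ d)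
    (hpar : ParOn r (d - 1) Set.univ)
    (hmin : ∀ U : Set V, ParOn r (d - 1) U → U = Set.univ) (U : Set V)
    (hU : ∀ S : Finset V, ↑S ⊆ U → S.Nonempty → S.card ≤ d → ∃ w ∈ U, ∀ s ∈ S, ¬ r s w) :
    ∃ w, ∀ u ∈ U, ¬ r u w := by
  classical
  by_contra hcon
  push Not at hcon
  obtain ⟨v0, -, -⟩ := hpar ∅ (by simp) (by simp)
  have key : ∀ X : Finset V, ↑X ⊆ U → X.card ≤ d - 1 → ∀ y ∈ U,
      ∃ w ∈ U, (w ∈ X ∨ ∀ x ∈ X, r w x) ∧ (∀ x ∈ X, ¬ r x w) ∧ ¬ r y w := by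
    intro X hXU hX y hy
    obtain ⟨w, hwU, hw⟩ := hU (insert y X)
      (by intro z hz; simp at hz; rcases hz with rfl | hz; exacts [hy, hXU hz])
      (Finset.insert_nonempty _ _) ((Finset.card_insert_le _ _).trans (by omega))
    have h1 : ∀ x ∈ X, ¬ r x w := fun x hx => hw x (Finset.mem_insert_of_mem hx)
    refine ⟨w, hwU, ?_, h1, hw y (Finset.mem_insert_self _ _)⟩
    by_cases h : w ∈ X
    · exact Or.inl h
    · refine Or.inr fun x hx => ?_
      exact (hr.2 w x (fun h' => h (h' ▸ hx))).resolve_right (h1 x hx)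
  have uniq : ∀ X : Finset V, ∀ w ∈ X, ∀ w' ∈ X, (∀ x ∈ X, ¬ r x w) → (∀ x ∈ X, ¬ r x w') →
      w = w' := by
    intro X w hw w' hw' h h'
    by_contra hne
    rcases hr.2 w w' hne with h1 | h1
    · exact h' w hw h1
    · exact h w' hw' h1
  obtain ⟨u0, hu0, -⟩ := hcon v0
  have hUu : U = Set.univ := by
    apply hmin
    intro X hXU hX
    by_contra hno
    push Not at hno
    obtain ⟨w, hwU, hw1, hw2, -⟩ := key X hXU hX u0 hu0
    have hwX : w ∈ X := hw1.resolve_right (fun h => by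
      obtain ⟨x, hx, hx'⟩ := hno w hwU; exact hx' (h x hx))
    obtain ⟨y, hyU, hy⟩ := hcon w
    obtain ⟨w', hwU', hw1', hw2', hw3'⟩ := key X hXU hX y hyU
    have hwX' : w' ∈ X := hw1'.resolve_right (fun h => by
      obtain ⟨x, hx, hx'⟩ := hno w' hwU'; exact hx' (h x hx))
    rw [uniq X w hwX w' hwX' hw2 hw2'] at hy
    exact hw3' hy
  subst hUu
  have hv : ({v0}ᶜ : Set V) = Set.univ := by
    apply hmin
    intro X _ hX
    by_contra hno
    push Not at hno
    have hno' : ∀ w, (∀ x ∈ X, r w x) → w = v0 := by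
      intro w hw
      by_contra hne
      obtain ⟨x, hx, hx'⟩ := hno w hne
      exact hx' (hw x hx)
    obtain ⟨y, -, hy⟩ := hcon v0
    obtain ⟨w, -, hw1, hw2, hw3⟩ := key X (Set.subset_univ _) hX y trivial
    have hwX : w ∈ X := hw1.resolve_right (fun h => by
      rw [hno' w h] at hw3; exact hw3 hy)
    obtain ⟨u, -, hu⟩ := hpar {v0, w} (Set.subset_univ _)
      ((Finset.card_le_two).trans (by omega))
    have huv : r u v0 := hu v0 (by simp)
    have huw : r u w := hu w (by simp)
    obtain ⟨w', -, hw1', hw2', hw3'⟩ := key X (Set.subset_univ _) hX u trivial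
    rcases hw1' with h | h
    · rw [uniq X w hwX w' h hw2 hw2'] at huw
      exact hw3' huw
    · rw [hno' w' h] at hw3'
      exact hw3' huv
  have : v0 ∈ ({v0}ᶜ : Set V) := hv ▸ trivial
  exact this rfl

/-- Corollary (f(1,d) = d for d ≥ 3, lower bound): for every `d ≥ 3` there is a finite
2-colored complete digraph with all loops red and no pair of distinct vertices joined
by blue edges in both directions, which cannot be covered by fewer than `d`
monochromatic `d`-dominating subgraphs. -/
theorem f_one_d_lower_bound (d : ℕ) (hd : 3 ≤ d) :
    ∃ (V : Type) (_ : Fintype V) (c : V → V → Color),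
      (∀ v : V, c v v = Color.red) ∧
      (∀ u v : V, u ≠ v → ¬(c u v = Color.blue ∧ c v u = Color.blue)) ∧
      ∀ (t : ℕ) (U : Fin t → Set V) (j : Fin t → Color),
        (⋃ i, U i) = Set.univ → (∀ i, IsMonoDom c d (j i) (U i)) → d ≤ t := by
  classical
  obtain ⟨V, hV, r, hcard, hr, hpar⟩ := Nat.find_spec (exists_hasPar (d - 1))
  have hmin : ∀ r' : V → V → Prop, Tour r' → ∀ U : Set V, ParOn r' (d - 1) U →
      U = Set.univ := by
    intro r' hr' U hU
    by_contra hne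
    obtain ⟨m, hm, hm'⟩ := hasPar_of_set r' hr' (d - 1) U hU hne
    rw [hcard] at hm
    exact Nat.find_min _ hm hm'
  have hb : ∀ u v, (if r u v then Color.blue else Color.red) = Color.blue ↔ r u v := by
    intro u v; split_ifs with h <;> simp [h]
  have hrd : ∀ u v, (if r u v then Color.blue else Color.red) = Color.red ↔ ¬ r u v := by
    intro u v; split_ifs with h <;> simp [h]
  refine ⟨V, hV, fun u v => if r u v then Color.blue else Color.red, ?_, ?_, ?_⟩
  · intro v
    exact (hrd v v).2 (fun h => hr.1 v v h h)
  · rintro u v - ⟨h1, h2⟩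
    exact hr.1 u v ((hb u v).1 h1) ((hb v u).1 h2)
  · intro t U j hcov hdom
    by_contra hlt
    have hw : ∀ i, ∃ w, ∀ u ∈ U i, ¬ r u w := by
      intro i
      have hi := hdom i
      cases hj : j i with
      | red =>
        rw [hj] at hi
        refine red_star r hr d hd hpar (hmin r hr) (U i) ?_
        intro S h1 h2 h3
        obtain ⟨w, hw, hw'⟩ := hi S h1 h2 h3
        exact ⟨w, hw, fun s hs => (hrd s w).1 (hw' s hs)⟩
      | blue =>
        rw [hj] at hi
        obtain ⟨v0, -, -⟩ := hpar ∅ (by simp) (by simp)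
        refine ⟨v0, fun v hv _ => ?_⟩
        have h1 : U i \ {v} = Set.univ := by
          apply hmin (fun a b => r b a) ⟨fun a b h => hr.1 b a h,
            fun a b h => hr.2 b a h.symm⟩
          intro X hXU hX
          obtain ⟨w, hwU, hw⟩ := hi (insert v X)
            (by intro z hz; simp at hz; rcases hz with rfl | hz; exacts [hv, (hXU hz).1])
            (Finset.insert_nonempty _ _) ((Finset.card_insert_le _ _).trans (by omega))
          refine ⟨w, ⟨hwU, ?_⟩, fun x hx => (hb x w).1 (hw x (Finset.mem_insert_of_mem hx))⟩
          rintro rfl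
          have := (hb w w).1 (hw w (Finset.mem_insert_self _ _))
          exact hr.1 w w this this
        have h2 : v ∈ U i \ {v} := h1 ▸ trivial
        exact h2.2 rfl
    choose w hw using hw
    obtain ⟨z, -, hz⟩ := hpar (Finset.univ.image w) (Set.subset_univ _)
      (Finset.card_image_le.trans (by simp; omega))
    have hzU : z ∈ ⋃ i, U i := hcov ▸ trivial
    obtain ⟨i, hi⟩ := Set.mem_iUnion.1 hzU
    exact hw i z hi (hz (w i) (Finset.mem_image_of_mem _ (Finset.mem_univ _)))
end

section
/- For every integer d ≥ 2 there exists a finite tournament T that is perfectly d-paradoxical, i.e., T is d-dominating, T is d-dominated, no subtournament of T is (d+1)-dominating, and no subtournament of T is (d+1)-dominated. -/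
theorem pp_prop {n n' a b l r : Prop} (h : n) (h' : n') (h1 : l ↔ ¬ r) (h2 : a ↔ b) :
    (n ∧ (a ↔ l)) ↔ ¬ (n' ∧ (b ↔ r)) := by
  by_cases a <;> by_cases r <;> simp_all

theorem pp_prop2 {a b l e k : Prop} (h3 : a ↔ ¬ l) (h2 : ¬ b) (h1 : ¬ e) :
    ((a ↔ b) ↔ (l ∨ (e ∧ k))) := by
  by_cases l <;> simp_all

theorem pp_exists_dom (d : ℕ) : ∃ (V : Type) (_ : Fintype V) (_ : Nonempty V) (E : V → V → Prop),
    IsTournament E ∧ DomOn E d (Set.univ : Set V) := by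
  classical
  obtain ⟨m, hm⟩ : ∃ m, m = d * d + d + 1 := ⟨_, rfl⟩
  let e := Fintype.equivFin (Finset (Fin m))
  let V := {p : Fin m × Finset (Fin m) // p.2.card ≤ d}
  let L : V → V → Prop := fun u w => u.1.1 < w.1.1 ∨ (u.1.1 = w.1.1 ∧ e u.1.2 < e w.1.2)
  let X : V → V → Prop := fun u w => (u.1.1 ∈ w.1.2 ↔ w.1.1 ∈ u.1.2)
  have hL : ∀ u w : V, u ≠ w → (L u w ↔ ¬ L w u) := by
    intro u w h
    have h2 : u.1.1 = w.1.1 → e u.1.2 ≠ e w.1.2 := by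
      intro h1 h2
      exact h (Subtype.ext (Prod.ext h1 (e.injective h2)))
    simp only [L]
    rcases lt_trichotomy u.1.1 w.1.1 with h1 | h1 | h1
    · simp [h1, h1.not_gt, h1.ne']
    · have := h2 h1
      simp only [h1, lt_irrefl, true_and, false_or]
      omega
    · simp [h1, h1.not_gt, h1.ne']
  refine ⟨V, inferInstance, ⟨⟨(⟨0, by omega⟩, ∅), by simp⟩⟩,
    fun u w => u ≠ w ∧ (X u w ↔ L u w), ⟨fun x h => h.1 rfl, ?_⟩, ?_⟩
  · intro x y h
    have h1 := hL x y h
    have h2 : X x y ↔ X y x := Iff.comm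
    exact pp_prop h h.symm h1 h2
  · intro S _ hne hS
    let B : Finset (Fin m) := S.image (fun u => u.1.1) ∪ S.biUnion (fun u => u.1.2)
    have hB : B.card < m := by
      have h1 : (S.image (fun u => u.1.1)).card ≤ d := Finset.card_image_le.trans hS
      have h2 : (S.biUnion (fun u => u.1.2)).card ≤ S.card * d :=
        Finset.card_biUnion_le_card_mul _ _ _ (fun u _ => u.2)
      have h3 : S.card * d ≤ d * d := Nat.mul_le_mul_right _ hS
      have h4 := Finset.card_union_le (S.image (fun u : V => u.1.1)) (S.biUnion (fun u => u.1.2))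
      simp only [B]
      omega
    obtain ⟨j, hj⟩ : ∃ j, j ∉ B := by
      by_contra hcon
      push Not at hcon
      have : B = Finset.univ := Finset.eq_univ_iff_forall.2 hcon
      rw [this] at hB
      simp at hB
    have hj1 : ∀ u ∈ S, u.1.1 ≠ j := by
      intro u hu h
      exact hj (Finset.mem_union_left _ (Finset.mem_image.2 ⟨u, hu, h⟩))
    have hj2 : ∀ u ∈ S, j ∉ u.1.2 := by
      intro u hu h
      exact hj (Finset.mem_union_right _ (Finset.mem_biUnion.2 ⟨u, hu, h⟩))
    let A : Finset (Fin m) := (S.image (fun u => u.1.1)).filter (fun i => ¬ i < j)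
    have hA : A.card ≤ d := (Finset.card_filter_le _ _).trans (Finset.card_image_le.trans hS)
    refine ⟨⟨(j, A), hA⟩, trivial, ?_⟩
    intro u hu
    have h1 := hj1 u hu
    have h2 := hj2 u hu
    refine ⟨fun h => h1 (by rw [h]), ?_⟩
    have h3 : u.1.1 ∈ A ↔ ¬ u.1.1 < j := by
      simp only [A, Finset.mem_filter, and_iff_right_iff_imp]
      intro _
      exact Finset.mem_image.2 ⟨u, hu, rfl⟩
    exact pp_prop2 h3 h2 h1

def PPGood (d n : ℕ) : Prop := ∃ (V : Type) (E : V → V → Prop) (U : Finset V),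
  U.Nonempty ∧ U.card = n ∧ IsTournament E ∧ DomOn E d (U : Set V)

theorem pp_step {V : Type} [Fintype V] {E : V → V → Prop} (hE : IsTournament E) (d : ℕ) {U : Set V}
    (hU : U.Nonempty) (h : DomOn E (d + 1) U) : ∃ n < Fintype.card V, PPGood d n := by
  classical
  obtain ⟨s, hs⟩ := hU
  let U' : Finset V := Finset.univ.filter (fun x => x ∈ U ∧ E s x)
  refine ⟨U'.card, ?_, V, E, U', ?_, rfl, hE, ?_⟩
  · apply Finset.card_lt_univ_of_notMem (x := s)
    simp [U', hE.1 s]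
  · obtain ⟨w, hw, hw'⟩ := h {s} (by simpa using hs) (by simp) (by simp)
    exact ⟨w, by simpa [U', hw] using hw'⟩
  · intro S hS hne hc
    obtain ⟨w, hw, hw'⟩ := h (insert s S) (by
      intro x hx
      rcases Finset.mem_insert.1 (Finset.mem_coe.1 hx) with rfl | hx
      · exact hs
      · have := hS (Finset.mem_coe.2 hx)
        simp [U'] at this
        exact this.1) (by simp) ((Finset.card_insert_le _ _).trans (by omega))
    refine ⟨w, ?_, fun x hx => hw' x (Finset.mem_insert_of_mem hx)⟩
    have := hw' s (Finset.mem_insert_self _ _)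
    simp [U', hw, this]

theorem pp_flip {V : Type} {E : V → V → Prop} (hE : IsTournament E) :
    IsTournament (fun x y => E y x) :=
  ⟨hE.1, fun x y h => hE.2 y x h.symm⟩

theorem pp_min (d : ℕ) : ∃ (V : Type) (_ : Fintype V) (_ : Nonempty V) (E : V → V → Prop),
    IsTournament E ∧ DomOn E d (Set.univ : Set V) ∧
      (∀ U : Set V, U.Nonempty → ¬ DomOn E (d + 1) U) ∧
      (∀ U : Set V, U.Nonempty → ¬ DomedOn E (d + 1) U) := by
  classical
  have hex : ∃ n, PPGood d n := by
    obtain ⟨V, _, _, E, hE, h⟩ := pp_exists_dom d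
    exact ⟨_, V, E, Finset.univ, Finset.univ_nonempty, rfl, hE, by simpa using h⟩
  obtain ⟨V, E, U, hU, hc, hE, hD⟩ := Nat.find_spec hex
  have hE' : IsTournament (fun x y : U => E x.1 y.1) :=
    ⟨fun x => hE.1 _, fun x y h => hE.2 _ _ (fun h' => h (Subtype.ext h'))⟩
  have hmin : ∀ n < Fintype.card U, ¬ PPGood d n := by
    intro n hn
    rw [Fintype.card_coe, hc] at hn
    exact Nat.find_min hex hn
  refine ⟨U, inferInstance, hU.to_subtype, fun x y => E x.1 y.1, hE', ?_, ?_, ?_⟩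
  · intro S _ hne hS
    obtain ⟨w, hw, hw'⟩ := hD (S.map (Function.Embedding.subtype _)) (by
      intro x hx
      simp at hx
      obtain ⟨h, _⟩ := hx
      exact h) (by simpa using hne) (by simpa using hS)
    refine ⟨⟨w, hw⟩, trivial, fun s hs => hw' s.1 ?_⟩
    exact Finset.mem_map.2 ⟨s, hs, rfl⟩
  · intro W hW h
    obtain ⟨n, hn, hg⟩ := pp_step hE' d hW h
    exact hmin n hn hg
  · intro W hW h
    obtain ⟨n, hn, hg⟩ := pp_step (pp_flip hE') d hW h
    exact hmin n hn hg

def ppE {W : Type} (E : W → W → Prop) : W ⊕ W → W ⊕ W → Prop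
  | .inl a, .inl b => E b a
  | .inl _, .inr _ => True
  | .inr _, .inl _ => False
  | .inr a, .inr b => E a b

theorem pp_pull {W V : Type} (f : W ↪ V) {F : W → W → Prop} {G : V → V → Prop} {k : ℕ} {U : Set V}
    (hf : ∀ a b, G (f a) (f b) ↔ F a b)
    (hcl : ∀ a w, w ∈ U → G (f a) w → ∃ b, f b = w)
    (h : DomOn G k U) : DomOn F k (f ⁻¹' U) := by
  intro S hS hne hc
  obtain ⟨w, hw, hw'⟩ := h (S.map f) (by
    intro x hx
    obtain ⟨a, ha, rfl⟩ := Finset.mem_map.1 (Finset.mem_coe.1 hx)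
    exact hS ha) (by simpa using hne) (by simpa using hc)
  obtain ⟨a, ha⟩ := hne
  obtain ⟨b, rfl⟩ := hcl a w hw (hw' _ (Finset.mem_map.2 ⟨a, ha, rfl⟩))
  exact ⟨b, hw, fun s hs => (hf s b).1 (hw' _ (Finset.mem_map.2 ⟨s, hs, rfl⟩))⟩

theorem pp_push {W V : Type} [Nonempty W] (f : W ↪ V) {F : W → W → Prop} {G : V → V → Prop}
    {k : ℕ} (hf : ∀ a b, F a b → G (f a) (f b))
    (hcl : ∀ v, (∃ b, f b = v) ∨ ∀ b, G v (f b))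
    (h : DomOn F k Set.univ) : DomOn G k Set.univ := by
  classical
  intro S _ _ hc
  let S' : Finset W := S.preimage f f.injective.injOn
  have hc' : S'.card ≤ k := by
    refine le_trans ?_ hc
    rw [← Finset.card_map f]
    apply Finset.card_le_card
    intro x hx
    obtain ⟨a, ha, rfl⟩ := Finset.mem_map.1 hx
    exact Finset.mem_preimage.1 ha
  obtain ⟨w, hw⟩ : ∃ w, ∀ s ∈ S', F s w := by
    rcases S'.eq_empty_or_nonempty with h0 | h0
    · exact ⟨Classical.arbitrary W, by simp [h0]⟩
    · obtain ⟨w, _, hw⟩ := h S' (Set.subset_univ _) h0 hc'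
      exact ⟨w, hw⟩
  refine ⟨f w, trivial, fun s hs => ?_⟩
  rcases hcl s with ⟨b, rfl⟩ | h1
  · exact hf _ _ (hw b (Finset.mem_preimage.2 hs))
  · exact h1 w

/-- Example (Bukh): for every `d ≥ 2` there exists a finite perfectly `d`-paradoxical
tournament: `d`-dominating, `d`-dominated, with no `(d+1)`-dominating subtournament
and no `(d+1)`-dominated subtournament. -/
theorem perfectly_paradoxical_exists (d : ℕ) (hd : 2 ≤ d) :
    ∃ (V : Type) (_ : Fintype V) (_ : Nonempty V) (E : V → V → Prop),
      IsTournament E ∧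
      DomOn E d (Set.univ : Set V) ∧
      DomedOn E d (Set.univ : Set V) ∧
      (∀ U : Set V, U.Nonempty → ¬ DomOn E (d + 1) U) ∧
      (∀ U : Set V, U.Nonempty → ¬ DomedOn E (d + 1) U) := by
  obtain ⟨W, _, _, E, hE, hD, h1, h2⟩ := pp_min d
  -- the two ends: `inr` is closed under out-neighbors, `inl` under in-neighbors
  have key1 : ∀ U : Set (W ⊕ W), U.Nonempty → ¬ DomOn (ppE E) (d + 1) U := by
    intro U hU h
    by_cases hr : (Sum.inr ⁻¹' U : Set W).Nonempty
    · refine h1 _ hr (pp_pull (G := ppE E) Function.Embedding.inr (fun a b => Iff.rfl) ?_ h)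
      rintro a (w | w) _ hw
      · exact hw.elim
      · exact ⟨w, rfl⟩
    · have hall : ∀ x ∈ U, ∃ b, Sum.inl b = x := by
        rintro (x | x) hx
        · exact ⟨x, rfl⟩
        · exact (hr ⟨x, hx⟩).elim
      obtain ⟨x, hx⟩ := hU
      obtain ⟨b, rfl⟩ := hall x hx
      exact h2 (Sum.inl ⁻¹' U) ⟨b, hx⟩ (pp_pull (G := ppE E) (F := fun x y => E y x)
        Function.Embedding.inl (fun a b => Iff.rfl) (fun a w hw _ => hall w hw) h)
  have key2 : ∀ U : Set (W ⊕ W), U.Nonempty → ¬ DomedOn (ppE E) (d + 1) U := by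
    intro U hU h
    by_cases hr : (Sum.inl ⁻¹' U : Set W).Nonempty
    · refine h1 _ hr (pp_pull (G := fun x y => ppE E y x) Function.Embedding.inl
        (fun a b => Iff.rfl) ?_ h)
      rintro a (w | w) _ hw
      · exact ⟨w, rfl⟩
      · exact hw.elim
    · have hall : ∀ x ∈ U, ∃ b, Sum.inr b = x := by
        rintro (x | x) hx
        · exact (hr ⟨x, hx⟩).elim
        · exact ⟨x, rfl⟩
      obtain ⟨x, hx⟩ := hU
      obtain ⟨b, rfl⟩ := hall x hx
      exact h2 (Sum.inr ⁻¹' U) ⟨b, hx⟩ (pp_pull (G := fun x y => ppE E y x) (F := fun x y => E y x)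
        Function.Embedding.inr (fun a b => Iff.rfl) (fun a w hw _ => hall w hw) h)
  refine ⟨W ⊕ W, inferInstance, inferInstance, ppE E, ⟨?_, ?_⟩, ?_, ?_, key1, key2⟩
  · rintro (x | x) <;> exact hE.1 x
  · rintro (x | x) (y | y) h
    · exact hE.2 y x (fun h' => h (by rw [h']))
    · simp [ppE]
    · simp [ppE]
    · exact hE.2 x y (fun h' => h (by rw [h']))
  · refine pp_push (G := ppE E) Function.Embedding.inr (fun a b h => h) ?_ hD
    rintro (v | v)
    · exact Or.inr fun b => trivial
    · exact Or.inl ⟨v, rfl⟩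
  · refine pp_push (G := fun x y => ppE E y x) Function.Embedding.inl (fun a b h => h) ?_ hD
    rintro (v | v)
    · exact Or.inl ⟨v, rfl⟩
    · exact Or.inr fun b => trivial
end

section
/- For every integer d ≥ 2 there exists a finite tournament T that is critical d-dominated and has no (d+1)-dominating subtournament: T is d-dominated, no proper subtournament of T is d-dominated, and no subtournament of T is (d+1)-dominating. -/
/-- There is a `d`-dominated tournament with `n` vertices. -/
def HasDomed (d n : ℕ) : Prop :=
  ∃ (V : Type) (_ : Fintype V) (_ : Nonempty V) (E : V → V → Prop),
    IsTournament E ∧ DomedOn E d (Set.univ : Set V) ∧ Fintype.card V = n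

theorem IsTournament.swap {V : Type} {E : V → V → Prop} (h : IsTournament E) :
    IsTournament (fun x y => E y x) :=
  ⟨h.1, fun x y hxy => h.2 y x hxy.symm⟩

theorem HasDomed.of_subset {V : Type} [Fintype V] {E : V → V → Prop} {d : ℕ}
    (h : IsTournament E) (U : Set V) (hU : U.Nonempty) (hD : DomedOn E d U) :
    HasDomed d U.ncard := by
  classical
  haveI : Nonempty U := hU.to_subtype
  refine ⟨U, inferInstance, inferInstance, fun x y => E x y,
    ⟨fun x => h.1 x, fun x y hxy => h.2 x y (fun e => hxy (Subtype.ext e))⟩, ?_, ?_⟩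
  · intro S _ hS hc
    obtain ⟨w, hw, hw'⟩ := hD (S.map (Function.Embedding.subtype _)) (by
      intro x hx
      simp at hx
      exact hx.1) (by simpa using hS) (by simpa using hc)
    exact ⟨⟨w, hw⟩, trivial, fun s hs => hw' s (by simpa using hs)⟩
  · rw [← Nat.card_coe_set_eq, Nat.card_eq_fintype_card]

/-- Vertices of the explicit `d`-dominated tournament. -/
abbrev VV (d : ℕ) : Type :=
  Fin (d + 1) × {a : Finset (Fin (d * d + 1)) // a.card ≤ d} × Fin (d * d + 1)

/-- Edges of the explicit `d`-dominated tournament. -/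
noncomputable def EE (d : ℕ) (x y : VV d) : Prop :=
  (x.1 < y.1 ∧ y.2.2 ∈ x.2.1.1) ∨ (y.1 < x.1 ∧ x.2.2 ∉ y.2.1.1) ∨
    (x.1 = y.1 ∧ Fintype.equivFin (VV d) x < Fintype.equivFin (VV d) y)

theorem EE_tournament (d : ℕ) : IsTournament (EE d) := by
  constructor
  · intro x hx
    simp [EE] at hx
  · intro x y hxy
    have hne : Fintype.equivFin (VV d) x ≠ Fintype.equivFin (VV d) y :=
      fun e => hxy ((Fintype.equivFin (VV d)).injective e)
    unfold EE
    rcases lt_trichotomy x.1 y.1 with h | h | h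
    · simp [h, h.not_gt, h.ne, h.ne']
    · simp only [h, lt_irrefl, false_and, true_and, false_or, not_lt]
      exact ⟨fun a => a.le, fun a => lt_of_le_of_ne a hne⟩
    · simp [h, h.not_gt, h.ne, h.ne']

theorem EE_domed (d : ℕ) : DomedOn (EE d) d Set.univ := by
  classical
  intro S _ _ hc
  obtain ⟨t, ht⟩ : ∃ t, t ∉ S.image (fun s => s.1) := by
    by_contra! h
    have h1 := Finset.card_le_card (fun x _ => h x : Finset.univ ⊆ _)
    have h2 := Finset.card_image_le (s := S) (f := fun s => s.1)
    simp only [Finset.card_univ, Fintype.card_fin] at h1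
    omega
  obtain ⟨b, hb⟩ : ∃ b, b ∉ S.biUnion (fun s => s.2.1.1) := by
    by_contra! h
    have h1 := Finset.card_le_card (fun x _ => h x : Finset.univ ⊆ _)
    have h2 := Finset.card_biUnion_le_card_mul S (fun s => s.2.1.1) d (fun s _ => s.2.1.2)
    have h3 := Nat.mul_le_mul_right d hc
    simp only [Finset.card_univ, Fintype.card_fin] at h1
    omega
  refine ⟨(t, ⟨S.image (fun s => s.2.2), Finset.card_image_le.trans hc⟩, b), trivial, ?_⟩
  intro s hs
  have hts : t ≠ s.1 := fun e => ht (e ▸ Finset.mem_image_of_mem _ hs)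
  rcases lt_or_gt_of_ne hts with h | h
  · exact Or.inl ⟨h, Finset.mem_image_of_mem (fun s => s.2.2) hs⟩
  · exact Or.inr (Or.inl ⟨h, fun hm => hb (Finset.mem_biUnion.2 ⟨s, hs, hm⟩)⟩)

theorem HasDomed.exists (d : ℕ) : ∃ n, HasDomed d n :=
  ⟨_, VV d, inferInstance, ⟨(0, ⟨∅, by simp⟩, 0)⟩, EE d, EE_tournament d, EE_domed d, rfl⟩

/-- For every `d ≥ 2` there exists a finite tournament which is critical `d`-dominated
(it is `d`-dominated but no proper subtournament is) and has no `(d+1)`-dominating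
subtournament. -/
theorem critical_d_dominated_exists (d : ℕ) (hd : 2 ≤ d) :
    ∃ (V : Type) (_ : Fintype V) (_ : Nonempty V) (E : V → V → Prop),
      IsTournament E ∧
      DomedOn E d (Set.univ : Set V) ∧
      (∀ U : Set V, U.Nonempty → U ≠ Set.univ → ¬ DomedOn E d U) ∧
      (∀ U : Set V, U.Nonempty → ¬ DomOn E (d + 1) U) := by
  classical
  obtain ⟨V, iF, iN, E, hT, hD, hcard⟩ := Nat.find_spec (HasDomed.exists d)
  have hmin : ∀ U : Set V, U ≠ Set.univ → ¬ HasDomed d U.ncard := by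
    intro U hne hU
    have h1 := Nat.find_min' (HasDomed.exists d) hU
    rw [← hcard] at h1
    have h2 := Set.ncard_lt_card hne
    rw [Nat.card_eq_fintype_card] at h2
    omega
  refine ⟨V, iF, iN, E, hT, hD, ?_, ?_⟩
  · intro U hU hne hUD
    exact hmin U hne (HasDomed.of_subset hT U hU hUD)
  · rintro U ⟨v, hv⟩ hUD
    refine hmin {w | w ∈ U ∧ E v w} (fun e => ?_)
      (HasDomed.of_subset hT.swap {w | w ∈ U ∧ E v w} ?_ ?_)
    · have : v ∈ {w | w ∈ U ∧ E v w} := e ▸ Set.mem_univ v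
      exact hT.1 v this.2
    · obtain ⟨w, hw, hw'⟩ := hUD {v} (by simpa using hv) (by simp) (by simp)
      exact ⟨w, hw, hw' v (by simp)⟩
    · intro S hS _ hc
      obtain ⟨w, hw, hw'⟩ := hUD (insert v S) (by
        intro x hx
        rcases Finset.mem_insert.1 (Finset.mem_coe.1 hx) with rfl | h
        · exact hv
        · exact (hS h).1) (by simp) ((Finset.card_insert_le _ _).trans (by omega))
      exact ⟨w, ⟨hw, hw' v (by simp)⟩, fun s hs => hw' s (Finset.mem_insert_of_mem hs)⟩
end

section
/- Let d ≥ 2 be an integer and let T = (V,E) be a tournament that is 2-dominating. Suppose there exists W ⊆ V with |W| = d and a vertex v ∈ V such that v is the unique vertex u ∈ V with (w,u) ∈ E for all w ∈ W (i.e., W dominates exactly one vertex, namely v). Then T*, the digraph obtained from T by adding a loop at every vertex, is not (d+1)-dominating. -/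
/-- `T* `: the digraph obtained from `E` by adding a loop at every vertex. -/
def WithLoops {V : Type*} (E : V → V → Prop) : V → V → Prop :=
  fun x y => E x y ∨ x = y

/-- Lemma: if `T` is a 2-dominating tournament and some set `W` of `d` vertices
dominates exactly one vertex `v`, then `T*` is not `(d+1)`-dominating. -/
theorem star_not_dominating_of_unique {V : Type*} (d : ℕ) (hd : 2 ≤ d)
    (E : V → V → Prop) (hT : IsTournament E)
    (h2 : DomOn E 2 (Set.univ : Set V))
    (W : Finset V) (hW : W.card = d) (v : V)
    (hdom : ∀ w ∈ W, E w v)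
    (huniq : ∀ u : V, (∀ w ∈ W, E w u) → u = v) :
    ¬ DomOn (WithLoops E) (d + 1) (Set.univ : Set V) := by
  classical
  intro hD
  obtain ⟨hl, ht⟩ := hT
  have key : ∀ x y, E x y → WithLoops E y x → False := by
    intro x y hxy hyx
    rcases hyx with h | h
    · have hne : x ≠ y := by
        rintro rfl
        exact hl _ h
      exact (ht x y hne).1 hxy h
    · subst h
      exact hl _ hxy
  obtain ⟨w0, hw0⟩ : ∃ w0, ∀ u ∈ W, (∀ w ∈ W, WithLoops E w u) → u = w0 := by
    by_cases h : ∃ u ∈ W, ∀ w ∈ W, WithLoops E w u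
    · obtain ⟨a, ha, haa⟩ := h
      refine ⟨a, fun u hu huu => ?_⟩
      rcases haa u hu with h | h
      · exact (key _ _ h (huu a ha)).elim
      · exact h
    · exact ⟨v, fun u hu huu => (h ⟨u, hu, huu⟩).elim⟩
  obtain ⟨x, -, hx⟩ := h2 {v, w0} (Set.subset_univ _) (by simp) Finset.card_le_two
  have hvx : E v x := hx v (by simp)
  have hwx : E w0 x := hx w0 (by simp)
  obtain ⟨u, -, hu⟩ := hD (insert x W) (Set.subset_univ _) (by simp)
    (hW ▸ Finset.card_insert_le x W)
  have hxu := hu x (by simp)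
  have hWu : ∀ w ∈ W, WithLoops E w u := fun w hw => hu w (by simp [hw])
  by_cases huW : u ∈ W
  · have := hw0 u huW hWu
    subst this
    exact key _ _ hwx hxu
  · have : u = v := huniq u fun w hw => (hWu w hw).resolve_right (by rintro rfl; exact huW hw)
    subst this
    exact key _ _ hvx hxu
end

section
/- Let d ≥ 2 be an integer and let T = (V,E) be a critical d-dominating tournament. Then T*, the digraph obtained from T by adding a loop at every vertex, is not (d+1)-dominating. -/
/-- Lemma: if `T` is a critical `d`-dominating tournament (it is `d`-dominating but no
proper subtournament is), then `T*` is not `(d+1)`-dominating. -/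
theorem star_not_d_plus_one_dominating {V : Type*} [Nonempty V] (d : ℕ) (hd : 2 ≤ d)
    (E : V → V → Prop) (hT : IsTournament E)
    (hdom : DomOn E d (Set.univ : Set V))
    (hcrit : ∀ U : Set V, U.Nonempty → U ≠ Set.univ → ¬ DomOn E d U) :
    ¬ DomOn (WithLoops E) (d + 1) (Set.univ : Set V) := by
  classical
  intro hstar
  obtain ⟨hirr, htour⟩ := hT
  obtain ⟨v⟩ := ‹Nonempty V›
  obtain ⟨u, -, hu⟩ := hdom {v} (by simp) (by simp) (by simp; omega)
  have hvu : E v u := hu v (by simp)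
  have hnot := hcrit {v}ᶜ ⟨u, by
    rintro rfl
    exact hirr _ hvu⟩ (by
    intro h
    have : v ∈ ({v}ᶜ : Set V) := by rw [h]; trivial
    simp at this)
  unfold DomOn at hnot
  push Not at hnot
  obtain ⟨S, hSv, hSne, hSc, hS⟩ := hnot
  have hasym : ∀ x y, E x y → E y x → False := by
    intro x y h1 h2
    by_cases hxy : x = y
    · subst hxy; exact hirr _ h1
    · exact (htour x y hxy).1 h1 h2
  obtain ⟨z, -, hz⟩ := hdom S (by simp) hSne hSc
  have hzv : z = v := by
    by_contra hne
    obtain ⟨s, hs, hsn⟩ := hS z hne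
    exact hsn (hz s hs)
  subst hzv
  have key : ∀ x, E z x → ∃ w ∈ S, (∀ s ∈ S, E s w ∨ s = w) ∧ E x w := by
    intro x hx
    obtain ⟨w, -, hw⟩ := hstar (insert x S) (by simp) (by simp)
      ((Finset.card_insert_le _ _).trans (by omega))
    have hwS : ∀ s ∈ S, E s w ∨ s = w := fun s hs => hw s (by simp [hs])
    have hxw : E x w ∨ x = w := hw x (by simp)
    have hwz : w ≠ z := by
      rintro rfl
      rcases hxw with h | h
      · exact hasym _ _ hx h
      · subst h; exact hirr _ hx
    have hmem : w ∈ S := by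
      by_contra hn
      obtain ⟨s, hs, hsn⟩ := hS w hwz
      rcases hwS s hs with h | h
      · exact hsn h
      · subst h; exact hn hs
    refine ⟨w, hmem, hwS, ?_⟩
    rcases hxw with h | h
    · exact h
    · subst h; exact (hasym _ _ hx (hz _ hmem)).elim
  obtain ⟨w, hwS, hw, -⟩ := key u hvu
  obtain ⟨x, -, hx⟩ := hdom {z, w} (by simp) (by simp) (Finset.card_le_two.trans hd)
  obtain ⟨w', hwS', hw', hxw'⟩ := key x (hx z (by simp))
  have hww : w' = w := by
    rcases hw w' hwS' with h | h
    · rcases hw' w hwS with h' | h'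
      · exact (hasym _ _ h h').elim
      · exact h'.symm
    · exact h
  subst hww
  exact hasym _ _ hxw' (hx _ (by simp))
end

section
/- Let d ≥ 2 be an integer and let T = (V,E) be a critical d-dominating tournament. Then for every v ∈ V there exists W ⊆ V \ {v} with |W| = d such that v is the unique vertex u ∈ V with (w,u) ∈ E for all w ∈ W (i.e., W dominates v and no other vertex). -/
/-- Lemma: if `T` is a critical `d`-dominating tournament, then every vertex `v` is,
for some set `W ⊆ V \ {v}` of `d` vertices, the unique vertex dominated by `W`. -/
theorem critical_unique_dominated {V : Type*} (d : ℕ) (hd : 2 ≤ d)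
    (E : V → V → Prop) (hT : IsTournament E)
    (hdom : DomOn E d (Set.univ : Set V))
    (hcrit : ∀ U : Set V, U.Nonempty → U ≠ Set.univ → ¬ DomOn E d U) :
    ∀ v : V, ∃ W : Finset V, v ∉ W ∧ W.card = d ∧
      (∀ w ∈ W, E w v) ∧ (∀ u : V, (∀ w ∈ W, E w u) → u = v) := by
  classical
  intro v
  obtain ⟨x, -, hx⟩ := hdom {v} (Set.subset_univ _) (by simp) (by simp; omega)
  have hvx : E v x := hx v (by simp)
  have hxv : x ≠ v := by
    rintro rfl
    exact hT.1 _ hvx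
  have h := hcrit {y | y ≠ v} ⟨x, hxv⟩ (by
    intro h
    have : v ∈ {y | y ≠ v} := h ▸ Set.mem_univ v
    exact this rfl)
  unfold DomOn at h
  push Not at h
  obtain ⟨S, hSU, hne, hcard, hS⟩ := h
  have huniq : ∀ u : V, (∀ w ∈ S, E w u) → u = v := by
    intro u hu
    by_contra huv
    obtain ⟨s, hs, hn⟩ := hS u huv
    exact hn (hu s hs)
  refine ⟨S, fun hv => hSU hv rfl, ?_, ?_, huniq⟩
  · by_contra hlt
    obtain ⟨u, -, hu⟩ := hdom (insert v S) (Set.subset_univ _) (by simp)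
      ((Finset.card_insert_le _ _).trans (by omega))
    have huv := huniq u (fun w hw => hu w (Finset.mem_insert_of_mem hw))
    subst huv
    exact hT.1 _ (hu u (Finset.mem_insert_self _ _))
  · obtain ⟨u, -, hu⟩ := hdom S (Set.subset_univ _) hne hcard
    have huv := huniq u hu
    subst huv
    exact hu
end

section
/- Let d ≥ 2 be an integer, let T = (V,E) be a critical d-dominating tournament, and let U be a proper subset of V such that the restriction of T* to U is (d+1)-dominating. Then this restriction is trivially (d+1)-dominating: there exists w ∈ U such that (u,w) is an edge of T* for every u ∈ U (including the loop (w,w)). -/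
/-- Claim: if `T` is a critical `d`-dominating tournament and `U` is a (nonempty)
proper subset of `V` whose restriction of `T*` is `(d+1)`-dominating, then that
restriction is trivially `(d+1)`-dominating: some `w ∈ U` receives an edge of `T*`
from every vertex of `U` (including the loop at `w`). -/
theorem proper_dominating_is_trivial {V : Type*} (d : ℕ) (hd : 2 ≤ d)
    (E : V → V → Prop) (hT : IsTournament E)
    (hdom : DomOn E d (Set.univ : Set V))
    (hcrit : ∀ U : Set V, U.Nonempty → U ≠ Set.univ → ¬ DomOn E d U)
    (U : Set V) (hUne : U.Nonempty) (hUproper : U ≠ Set.univ)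
    (hU : DomOn (WithLoops E) (d + 1) U) :
    ∃ w ∈ U, ∀ u ∈ U, WithLoops E u w := by
  classical
  by_contra hno
  push Not at hno
  refine hcrit U hUne hUproper ?_
  intro S hSU hSne hSc
  obtain ⟨w, hwU, hw⟩ := hU S hSU hSne (by omega)
  by_cases hwS : w ∈ S
  · obtain ⟨u, huU, hu⟩ := hno w hwU
    obtain ⟨x, hxU, hx⟩ := hU (insert u S)
      (by
        intro y hy
        rcases Finset.mem_insert.1 (Finset.mem_coe.1 hy) with h | h
        · exact h ▸ huU
        · exact hSU h)
      (Finset.insert_nonempty _ _)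
      (by have := Finset.card_insert_le u S; omega)
    have hux := hx u (Finset.mem_insert_self _ _)
    by_cases hxS : x ∈ S
    · exfalso
      have hwx := hx w (Finset.mem_insert_of_mem hwS)
      have hne : x ≠ w := by
        rintro rfl
        exact hu hux
      have h1 : E w x := hwx.resolve_right (fun h => hne h.symm)
      have h2 : E x w := (hw x hxS).resolve_right hne
      exact (hT.2 x w hne).1 h2 h1
    · refine ⟨x, hxU, fun s hs => (hx s (Finset.mem_insert_of_mem hs)).resolve_right ?_⟩
      rintro rfl
      exact hxS hs
  · refine ⟨w, hwU, fun s hs => (hw s hs).resolve_right ?_⟩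
    rintro rfl
    exact hwS hs
end
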